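/- arXiv:0710.3991 — 3 statements merged into one kernel-verified Lean document; each statement's English description precedes it below -/
import Mathlib

section
/- Let F ⊂ Sym²(ℝⁿ) be a Dirichlet set with Dirichlet dual F̃, X ⊂ ℝⁿ open, and λ > 0. If u, v : X → ℝ are locally λ-quasiconvex functions with u of type F on X and v of type F̃ on X, then u + v is subaffine on X. -/
open Set Metric Filter MeasureTheory Asymptotics
open scoped Topology BigOperators RealInnerProductSpace

noncomputable section

abbrev Euc (n : ℕ) : Type := EuclideanSpace ℝ (Fin n)

abbrev SymMat (n : ℕ) : Type := ↥(selfAdjoint (Matrix (Fin n) (Fin n) ℝ))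

/-- `u` is subaffine on `X`. -/
def SubaffineOn {n : ℕ} (X : Set (Euc n)) (u : Euc n → EReal) : Prop :=
  ∀ K : Set (Euc n), IsCompact K → K ⊆ X →
    ∀ a : Euc n →ᵃ[ℝ] ℝ,
      (∀ x ∈ frontier K, u x ≤ (a x : EReal)) → ∀ x ∈ K, u x ≤ (a x : EReal)

/-- The Hessian matrix of `u` at `x`. -/
def hessMat {n : ℕ} (u : Euc n → ℝ) (x : Euc n) : Matrix (Fin n) (Fin n) ℝ :=
  fun i j => iteratedFDeriv ℝ 2 u x ![EuclideanSpace.single i 1, EuclideanSpace.single j 1]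

structure IsDirichletSet {n : ℕ} (F : Set (SymMat n)) : Prop where
  nonempty : F.Nonempty
  ne_univ : F ≠ Set.univ
  isClosed : IsClosed F
  add_psd : ∀ A ∈ F, ∀ P : SymMat n, (P : Matrix (Fin n) (Fin n) ℝ).PosSemidef → A + P ∈ F

/-- The Dirichlet dual `F̃ = −(∼ Int F)`. -/
def dirDual {n : ℕ} (F : Set (SymMat n)) : Set (SymMat n) := {A | -A ∉ interior F}

/-- A C² function `v` on `X` is of type `F`. -/
def IsTypeFC2 {n : ℕ} (F : Set (SymMat n)) (X : Set (Euc n)) (v : Euc n → ℝ) : Prop :=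
  ContDiffOn ℝ 2 v X ∧ ∀ x ∈ X, ∃ A ∈ F, (A : Matrix (Fin n) (Fin n) ℝ) = hessMat v x

/-- An u.s.c. function `u` is of type `F` on `X`. -/
def IsTypeF {n : ℕ} (F : Set (SymMat n)) (X : Set (Euc n)) (u : Euc n → EReal) : Prop :=
  ∀ v : Euc n → ℝ, IsTypeFC2 (dirDual F) X v → SubaffineOn X (fun x => u x + (v x : EReal))

/-- The ray set `F⃗` of `F`. -/
def raySet {n : ℕ} (F : Set (SymMat n)) : Set (SymMat n) :=
  closure {A : SymMat n | ∃ t₀ : ℝ, ∀ t : ℝ, t₀ ≤ t → t • A ∈ F}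

/-- The bilinear form `⟨A v, w⟩` of a matrix. -/
def bilin {n : ℕ} (A : Matrix (Fin n) (Fin n) ℝ) (v w : Euc n) : ℝ :=
  ∑ i, ∑ j, A i j * v i * w j

/-- `A` is not negative definite. -/
def NotNegDef {n : ℕ} (A : SymMat n) : Prop :=
  ¬ (-(A : Matrix (Fin n) (Fin n) ℝ)).PosDef

def IsLocalDefiningFn {n : ℕ} (Ω U : Set (Euc n)) (ρ : Euc n → ℝ) : Prop :=
  IsOpen U ∧ ContDiffOn ℝ (⊤ : ℕ∞) ρ U ∧ Ω ∩ U = {y ∈ U | ρ y < 0} ∧ ∀ y ∈ U, fderiv ℝ ρ y ≠ 0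

def HasSmoothBoundary {n : ℕ} (Ω : Set (Euc n)) : Prop :=
  ∀ x ∈ frontier Ω, ∃ U ρ, x ∈ U ∧ IsLocalDefiningFn Ω U ρ

/-- `∂Ω` is strictly `G`-convex at `x`. -/
def StrictlyConvexAt {n : ℕ} (G : Set (SymMat n)) (Ω : Set (Euc n)) (x : Euc n) : Prop :=
  ∃ U ρ, x ∈ U ∧ IsLocalDefiningFn Ω U ρ ∧
    ∃ B ∈ interior G, ∀ v w : Euc n, fderiv ℝ ρ x v = 0 → fderiv ℝ ρ x w = 0 →
      bilin (hessMat ρ x) v w = bilin (B : Matrix (Fin n) (Fin n) ℝ) v w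

def symOne (n : ℕ) : SymMat n := ⟨1, selfAdjoint.mem_iff.mpr (IsSelfAdjoint.one _)⟩

/-- `u` is twice differentiable at `x` with Hessian `A`. -/
def TwiceDiffWithHessAt {n : ℕ} (u : Euc n → ℝ) (x : Euc n)
    (A : Matrix (Fin n) (Fin n) ℝ) : Prop :=
  ∃ p : Euc n, (fun h : Euc n => u (x + h) - u x - ⟪p, h⟫ - 1/2 * bilin A h h)
      =o[𝓝 (0 : Euc n)] fun h => ‖h‖ ^ 2

/-! If `u + v` exceeded an affine function somewhere in a compact set but not on its boundary, it
would, after adding a small multiple of `‖y‖ ^ 2`, still do so; hence `u + v` is touched from above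
by a strictly concave paraboloid at some interior point. After adding `m * ‖y‖ ^ 2 / 2` to both
functions they are convex, and the contact paraboloid may be taken with a nonnegative coefficient.

Convexity and contact with a paraboloid together make the subgradient of each summand Lipschitz, at
a contact point relative to *all* nearby points. This is used twice. By Jensen's argument, the
slopes of slightly steeper contact paraboloids cover a ball, so the set of contact points is not
null. By Stepanov's theorem, the subgradient of `v` is differentiable at almost every contact point,
and Alexandrov's argument then gives `v` a second-order expansion there.

At such a point with Hessian `N`, the expansion and the type of `v` show that `N`, raised by a small
multiple of the identity, lies in the dual of `F`; the contact bounds `u` from above, and the type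
of `u` puts the negative of that same matrix in the interior of `F`, a contradiction. -/

open scoped NNReal

section Stepanov

variable {E F : Type*} [NormedAddCommGroup E] [NormedSpace ℝ E]
  [NormedAddCommGroup F] [NormedSpace ℝ F]

lemma measure_inter_closedBall_add_le [FiniteDimensional ℝ E] [MeasurableSpace E] [BorelSpace E]
    (μ : Measure E) [μ.IsAddHaarMeasure] {C : Set E} {x y : E} {ε : ℝ} (hε : 0 < ε) (hε1 : ε ≤ 1)
    (h : ε * dist y x < infDist y C) :
    μ (C ∩ closedBall x (2 * dist y x))
      + ENNReal.ofReal ((ε / 2) ^ Module.finrank ℝ E) * μ (closedBall x (2 * dist y x))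
      ≤ μ (closedBall x (2 * dist y x)) := by
  have hscale : μ (closedBall y (ε * dist y x)) =
      ENNReal.ofReal ((ε / 2) ^ Module.finrank ℝ E) * μ (closedBall x (2 * dist y x)) := by
    rw [show ε * dist y x = ε / 2 * (2 * dist y x) by ring,
      Measure.addHaar_closedBall_mul μ y (by positivity) (by positivity),
      Measure.addHaar_closedBall_center μ x]
  have hdisj : Disjoint (C ∩ closedBall x (2 * dist y x)) (closedBall y (ε * dist y x)) :=
    (disjoint_closedBall_of_lt_infDist h).symm.mono_left inter_subset_left
  have hsub : closedBall y (ε * dist y x) ⊆ closedBall x (2 * dist y x) :=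
    closedBall_subset_closedBall' (by nlinarith [dist_nonneg (x := y) (y := x)])
  rw [← hscale, ← measure_union hdisj measurableSet_closedBall]
  exact measure_mono (union_subset inter_subset_right hsub)

lemma isLittleO_infDist_of_tendsto_density_one [FiniteDimensional ℝ E] [MeasurableSpace E]
    [BorelSpace E] (μ : Measure E) [μ.IsAddHaarMeasure] {C : Set E} {x : E}
    (hx : x ∈ C)
    (h : Tendsto (fun r => μ (C ∩ closedBall x r) / μ (closedBall x r)) (𝓝[>] 0) (𝓝 1)) :
    (fun y => infDist y C) =o[𝓝 x] fun y => y - x := by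
  rw [isLittleO_iff]
  intro ε hε
  set δ := min ε 1
  have hδ : 0 < δ := lt_min hε one_pos
  set κ := ENNReal.ofReal ((δ / 2) ^ Module.finrank ℝ E)
  have hκ : 0 < κ := ENNReal.ofReal_pos.2 (by positivity)
  have hradius : Tendsto (fun y => 2 * dist y x) (𝓝[≠] x) (𝓝[>] 0) := by
    refine tendsto_nhdsWithin_iff.2 ⟨?_, ?_⟩
    · have hcont : Continuous fun y => 2 * dist y x := by fun_prop
      simpa using (hcont.tendsto x).mono_left nhdsWithin_le_nhds
    · filter_upwards [self_mem_nhdsWithin] with y hy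
      simpa using hy
  have hdense := hradius.eventually
    (h.eventually_const_lt (ENNReal.sub_lt_self ENNReal.one_ne_top one_ne_zero hκ.ne'))
  filter_upwards [eventually_nhdsWithin_iff.1 hdense] with y hy
  rw [Real.norm_of_nonneg infDist_nonneg, ← dist_eq_norm]
  rcases eq_or_ne y x with rfl | hyx
  · simp [infDist_zero_of_mem hx]
  refine le_trans ?_ (mul_le_mul_of_nonneg_right (min_le_left ε 1) dist_nonneg)
  by_contra! hfar
  have hball : μ (closedBall x (2 * dist y x)) ≠ 0 :=
    (measure_closedBall_pos μ x (by have := dist_pos.2 hyx; positivity)).ne'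
  refine (hy hyx).not_ge (ENNReal.le_sub_of_add_le_right ENNReal.ofReal_ne_top ?_)
  rw [← ENNReal.mul_div_cancel_right (a := κ) hball measure_closedBall_lt_top.ne,
    ← ENNReal.add_div, ENNReal.div_le_iff hball measure_closedBall_lt_top.ne, one_mul]
  exact measure_inter_closedBall_add_le μ hδ (min_le_right ε 1) hfar

lemma hasFDerivAt_of_isLittleO_infDist {ξ : E → F} {A : E →L[ℝ] F} {C U : Set E} {x : E} {K : ℝ≥0}
    (hA : HasFDerivWithinAt ξ A C x) (hx : x ∈ C) (hU : U ∈ 𝓝 x)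
    (hξ : ∀ z ∈ C, ∀ y ∈ U, dist (ξ y) (ξ z) ≤ K * dist y z)
    (hC : (fun y => infDist y C) =o[𝓝 x] fun y => y - x) : HasFDerivAt ξ A x := by
  -- `ξ y` is compared with the value of `ξ` at an almost nearest point of `C`.
  have exists_near (y : E) : ∃ z ∈ C, dist y z ≤ infDist y C + ‖y - x‖ ^ 2 := by
    by_cases hy : y = x
    · exact ⟨x, hx, by simp [hy, infDist_zero_of_mem hx]⟩
    · have : infDist y C < infDist y C + ‖y - x‖ ^ 2 :=
        lt_add_of_pos_right _ (by have := sub_ne_zero.2 hy; positivity)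
      obtain ⟨z, hz, hyz⟩ := (infDist_lt_iff ⟨x, hx⟩).1 this
      exact ⟨z, hz, hyz.le⟩
  choose near near_mem dist_near using exists_near
  have hsq : (fun y => ‖y - x‖ ^ 2) =o[𝓝 x] fun y => y - x :=
    isLittleO_norm_right.1 <| (isLittleO_norm_pow_id one_lt_two).comp_tendsto
      (tendsto_sub_nhds_zero_iff.2 tendsto_id) |>.norm_right
  have hnear : (fun y => y - near y) =o[𝓝 x] fun y => y - x :=
    (isBigO_of_le _ fun y => by
      rw [← dist_eq_norm]
      exact (dist_near y).trans (le_abs_self _)).trans_isLittleO (hC.add hsq)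
  have hnear' : (fun y => near y - x) =O[𝓝 x] fun y => y - x := by
    simpa using (isBigO_refl (fun y => y - x) (𝓝 x)).sub hnear.isBigO
  have htendsto : Tendsto near (𝓝 x) (𝓝[C] x) := by
    refine tendsto_nhdsWithin_iff.2 ⟨?_, Eventually.of_forall near_mem⟩
    exact tendsto_sub_nhds_zero_iff.1
      (hnear'.trans_tendsto (tendsto_sub_nhds_zero_iff.2 tendsto_id))
  have hjump : (fun y => ξ y - ξ (near y)) =o[𝓝 x] fun y => y - x :=
    (IsBigO.of_bound K (by
      filter_upwards [hU] with y hy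
      simpa only [dist_eq_norm] using hξ _ (near_mem y) y hy)).trans_isLittleO hnear
  have hwithin : (fun y => ξ (near y) - ξ x - A (near y - x)) =o[𝓝 x] fun y => y - x :=
    ((hasFDerivWithinAt_iff_isLittleO.1 hA).comp_tendsto htendsto).trans_isBigO hnear'
  have hlinear : (fun y => A (y - near y)) =o[𝓝 x] fun y => y - x :=
    (A.isBigO_comp _ _).trans_isLittleO hnear
  refine HasFDerivAt.of_isLittleO (((hjump.add hwithin).sub hlinear).congr_left fun y => ?_)
  simp only [map_sub]
  abel

theorem ae_differentiableAt_of_dist_le [FiniteDimensional ℝ E] [FiniteDimensional ℝ F]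
    [MeasurableSpace E] [BorelSpace E] (μ : Measure E) [μ.IsAddHaarMeasure] {ξ : E → F}
    {C U : Set E} {K : ℝ≥0} (hU : IsOpen U) (hCU : C ⊆ U)
    (hξ : ∀ z ∈ C, ∀ y ∈ U, dist (ξ y) (ξ z) ≤ K * dist y z) :
    ∀ᵐ x ∂μ, x ∈ C → DifferentiableAt ℝ ξ x := by
  have hLip : LipschitzOnWith K ξ C :=
    LipschitzOnWith.of_dist_le_mul fun y hy z hz => hξ z hz y (hCU hy)
  filter_upwards [hLip.ae_differentiableWithinAt_of_mem (μ := μ),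
    ae_imp_of_ae_restrict (Besicovitch.ae_tendsto_measure_inter_div μ C)] with x hdiff hdens hx
  exact (hasFDerivAt_of_isLittleO_infDist (hdiff hx).hasFDerivWithinAt hx
    (hU.mem_nhds (hCU hx)) hξ
    (isLittleO_infDist_of_tendsto_density_one μ hx (hdens hx))).differentiableAt

end Stepanov

section Contact

variable {E : Type*} [NormedAddCommGroup E] [InnerProductSpace ℝ E]
  {f g w : E → ℝ} {s t : Set E} {a b p x y z : E} {c : ℝ}

/-- `a` is a subgradient at `x` of the restriction of `f` to `s`. -/
def IsSubgradientOn (f : E → ℝ) (s : Set E) (a x : E) : Prop :=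
  ∀ y ∈ s, f x + ⟪a, y - x⟫ ≤ f y

/-- On `s`, the graph of `f` is touched from above at `x` by a paraboloid with slope `p` there and
Hessian `2 * c`; the coefficient `c` may have any sign. -/
def IsUpperContactOn (f : E → ℝ) (s : Set E) (c : ℝ) (p x : E) : Prop :=
  ∀ y ∈ s, f y ≤ f x + ⟪p, y - x⟫ + c * ‖y - x‖ ^ 2

/-- The points at which the graph of `f` over `s` is touched from above by a paraboloid with
Hessian `2 * c`. -/
def upperContactSet (f : E → ℝ) (s : Set E) (c : ℝ) : Set E :=
  {x | ∃ p, IsUpperContactOn f s c p x}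

lemma IsUpperContactOn.mono (h : IsUpperContactOn f t c p x) (hst : s ⊆ t) :
    IsUpperContactOn f s c p x :=
  fun y hy => h y (hst hy)

lemma IsUpperContactOn.sub_isSubgradientOn (h : IsUpperContactOn (fun y => f y + g y) s c p x)
    (hg : IsSubgradientOn g s b x) : IsUpperContactOn f s c (p - b) x := by
  intro y hy
  rw [inner_sub_left]
  linarith [h y hy, hg y hy]

lemma exists_strongDual_le_sub_of_convexOn {V : Type*} [NormedAddCommGroup V] [NormedSpace ℝ V]
    {f : V → ℝ} {s : Set V} {x : V} (hs : IsOpen s) (hf : ConvexOn ℝ s f)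
    (hcont : ContinuousOn f s) (hx : x ∈ s) :
    ∃ φ : StrongDual ℝ V, ∀ y ∈ s, φ (y - x) ≤ f y - f x := by
  -- A hyperplane through `(x, f x)` avoiding the open strict epigraph is not vertical.
  have hopen : IsOpen {q : V × ℝ | q.1 ∈ s ∧ f q.1 < q.2} := by
    refine isOpen_iff_mem_nhds.2 fun ⟨y, τ⟩ ⟨hy, hyτ⟩ => ?_
    have hfst : ContinuousAt (fun q : V × ℝ => f q.1) (y, τ) :=
      (hcont.continuousAt (hs.mem_nhds hy)).comp (f := Prod.fst) continuousAt_fst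
    exact (continuousAt_fst.eventually (hs.mem_nhds hy)).and
      (hfst.eventually_lt continuousAt_snd hyτ)
  obtain ⟨Φ, hΦ⟩ := geometric_hahn_banach_open_point hf.convex_strict_epigraph hopen
    (x := (x, f x)) (by simp)
  have hsplit (y : V) (τ : ℝ) : Φ (y, τ) = Φ (y, 0) + τ * Φ (0, 1) := by
    rw [← smul_eq_mul, ← map_smul, ← map_add]
    simp
  set k := Φ (0, 1)
  have hk : k < 0 := by
    have := hΦ (x, f x + 1) ⟨hx, lt_add_one _⟩
    rw [hsplit x (f x + 1), hsplit x (f x)] at this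
    linarith
  have hsupport : ∀ y ∈ s, Φ (y, 0) + f y * k ≤ Φ (x, 0) + f x * k := fun y hy => by
    have hlim : Tendsto (fun τ => Φ (y, 0) + τ * k) (𝓝[>] (f y)) (𝓝 (Φ (y, 0) + f y * k)) :=
      (Continuous.tendsto (by fun_prop) _).mono_left nhdsWithin_le_nhds
    refine le_of_tendsto hlim (eventually_mem_nhdsWithin.mono fun τ hτ => ?_)
    rw [← hsplit, ← hsplit]
    exact (hΦ (y, τ) ⟨hy, hτ⟩).le
  refine ⟨(-k)⁻¹ • Φ.comp (ContinuousLinearMap.inl ℝ V ℝ), fun y hy => ?_⟩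
  have hφ : Φ (y - x, 0) = Φ (y, 0) - Φ (x, 0) := by simp [← map_sub]
  simp only [smul_apply, ContinuousLinearMap.comp_apply,
    ContinuousLinearMap.inl_apply, smul_eq_mul, hφ]
  rw [inv_mul_le_iff₀ (neg_pos.2 hk)]
  linarith [hsupport y hy]

lemma exists_isSubgradientOn [FiniteDimensional ℝ E] (hs : IsOpen s) (hf : ConvexOn ℝ s f)
    (hx : x ∈ s) : ∃ a, IsSubgradientOn f s a x := by
  obtain ⟨φ, hφ⟩ := exists_strongDual_le_sub_of_convexOn hs hf (hf.continuousOn hs) hx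
  refine ⟨(InnerProductSpace.toDual ℝ E).symm φ, fun y hy => ?_⟩
  rw [InnerProductSpace.toDual_symm_apply]
  linarith [hφ y hy]

lemma norm_sub_le_of_isSubgradientOn_of_isUpperContactOn {ρ : ℝ} (hc : 0 ≤ c) (hρ : 0 < ρ)
    (hyz : ‖y - z‖ ≤ ρ) (hs : closedBall y ρ ⊆ s) (ha : IsSubgradientOn f s a y)
    (hb : IsUpperContactOn f s c b z) (hzy : f z + ⟪b, y - z⟫ ≤ f y) : ‖a - b‖ ≤ 4 * c * ρ := by
  rcases eq_or_ne (a - b) 0 with hab | hab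
  · rw [hab, norm_zero]
    positivity
  have hpos : 0 < ‖a - b‖ := norm_pos_iff.2 hab
  -- Compare the two bounds on `f` at distance `ρ` from `y`, in the direction of `a - b`.
  set e := (ρ / ‖a - b‖) • (a - b)
  have he : ‖e‖ = ρ := by
    rw [norm_smul, Real.norm_of_nonneg (by positivity), div_mul_cancel₀ _ hpos.ne']
  have hinner : ⟪a - b, e⟫ = ρ * ‖a - b‖ := by
    rw [inner_smul_right, real_inner_self_eq_norm_sq]
    field_simp
  have hmem : y + e ∈ s := hs (by simp [he])
  have hlower := ha _ hmem
  have hupper := hb _ hmem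
  rw [add_sub_cancel_left] at hlower
  rw [add_sub_right_comm, inner_add_right] at hupper
  have hnorm : ‖y - z + e‖ ≤ 2 * ρ := (norm_add_le _ _).trans (by linarith)
  have hquad : c * ‖y - z + e‖ ^ 2 ≤ c * (2 * ρ) ^ 2 := by gcongr
  rw [inner_sub_left] at hinner
  refine le_of_mul_le_mul_left ?_ hρ
  linarith

lemma IsSubgradientOn.eq_of_isUpperContactOn (hc : 0 ≤ c) (hs : s ∈ 𝓝 x)
    (ha : IsSubgradientOn f s a x) (hb : IsUpperContactOn f s c b x) : a = b := by
  obtain ⟨r, hr, hball⟩ := nhds_basis_closedBall.mem_iff.1 hs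
  have hle : ∀ᶠ ρ in 𝓝[>] 0, ‖a - b‖ ≤ 4 * c * ρ := by
    filter_upwards [Ioc_mem_nhdsGT hr] with ρ hρ
    exact norm_sub_le_of_isSubgradientOn_of_isUpperContactOn hc hρ.1 (by simpa using hρ.1.le)
      ((closedBall_subset_closedBall hρ.2).trans hball) ha hb (by simp)
  have hlim : Tendsto (fun ρ => 4 * c * ρ) (𝓝[>] 0) (𝓝 (4 * c * 0)) :=
    (Continuous.tendsto (by fun_prop) _).mono_left nhdsWithin_le_nhds
  rw [mul_zero] at hlim
  exact sub_eq_zero.1 (norm_le_zero_iff.1 (ge_of_tendsto hlim hle))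

lemma IsSubgradientOn.norm_sub_le (hc : 0 ≤ c) (hs : IsOpen s) (hyz : closedBall y ‖y - z‖ ⊆ s)
    (ha : IsSubgradientOn f s a y) (hb : IsSubgradientOn f s b z)
    (hb' : IsUpperContactOn f s c b z) : ‖a - b‖ ≤ 4 * c * ‖y - z‖ := by
  have hy : y ∈ s := hyz (mem_closedBall_self (norm_nonneg _))
  rcases eq_or_ne y z with rfl | hne
  · simp [ha.eq_of_isUpperContactOn hc (hs.mem_nhds hy) hb']
  · exact norm_sub_le_of_isSubgradientOn_of_isUpperContactOn hc (norm_pos_iff.2 (sub_ne_zero.2 hne))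
      le_rfl hyz ha hb' (hb y hy)

lemma IsSubgradientOn.dist_le_of_mem_ball {x₀ : E} {r : ℝ} {L : ℝ≥0} (hy : y ∈ ball x₀ (r / 3))
    (hz : z ∈ ball x₀ (r / 3)) (ha : IsSubgradientOn f (ball x₀ r) a y)
    (hb : IsSubgradientOn f (ball x₀ r) b z) (hb' : IsUpperContactOn f (ball x₀ r) L b z) :
    dist a b ≤ (4 * L : ℝ≥0) * dist y z := by
  rw [dist_eq_norm a, dist_eq_norm y]
  refine ha.norm_sub_le L.2 isOpen_ball (closedBall_subset_ball' ?_) hb hb'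
  rw [← dist_eq_norm]
  linarith [dist_triangle_right y z x₀, mem_ball.1 hy, mem_ball.1 hz]

lemma IsUpperContactOn.of_add (hc : 0 ≤ c) (hs : s ∈ 𝓝 x) (ha : IsSubgradientOn f s a x)
    (hb : IsSubgradientOn g s b x) (h : IsUpperContactOn (fun y => f y + g y) s c p x) :
    a + b = p ∧ IsUpperContactOn f s c a x ∧ IsUpperContactOn g s c b x := by
  have hf := h.sub_isSubgradientOn hb
  have hab : a = p - b := ha.eq_of_isUpperContactOn hc hs hf
  simp only [add_comm (f _)] at h
  have hba : b = p - a := by rw [hab, sub_sub_cancel]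
  exact ⟨eq_sub_iff_add_eq.1 hab, hab ▸ hf, hba ▸ h.sub_isSubgradientOn ha⟩

end Contact

section Alexandrov

variable {E : Type*} [NormedAddCommGroup E]

lemma norm_sub_le_of_forall_norm_sub_le {D : ℝ → E} {κ M : ℝ}
    (h : ∀ t s : ℝ, 0 ≤ t → t ≤ s → s ≤ 1 → ‖D s - D t‖ ≤ κ * (s - t) + M * (s - t) ^ 2) :
    ‖D 1 - D 0‖ ≤ κ := by
  -- Over `N + 1` equal steps the quadratic errors add up to only `M / (N + 1)`.
  have hpartition (N : ℕ) : ‖D 1 - D 0‖ ≤ κ + M * (1 / ((N : ℝ) + 1)) := by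
    set d : ℝ := 1 / ((N : ℝ) + 1) with hd
    have hd0 : 0 < d := by positivity
    have hNd : ((N + 1 : ℕ) : ℝ) * d = 1 := by
      rw [hd]
      push_cast
      field_simp
    have hstep : ∀ {k : ℕ}, k < N + 1 →
        dist (D ((k : ℕ) * d)) (D ((k + 1 : ℕ) * d)) ≤ κ * d + M * d ^ 2 := fun {k} hk => by
      have hsub : ((k + 1 : ℕ) : ℝ) * d - k * d = d := by
        push_cast
        ring
      have hle : ((k + 1 : ℕ) : ℝ) * d ≤ 1 := by
        rw [← hNd]
        gcongr
        exact Nat.le_of_lt_succ hk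
      simpa only [hsub, dist_eq_norm'] using
        h (k * d) ((k + 1 : ℕ) * d) (by positivity) (by linarith) hle
    have htotal := dist_le_range_sum_of_dist_le (f := fun k : ℕ => D (k * d)) (N + 1) hstep
    rw [Finset.sum_const, Finset.card_range, nsmul_eq_mul, hNd, Nat.cast_zero, zero_mul,
      dist_eq_norm'] at htotal
    calc ‖D 1 - D 0‖ ≤ ((N + 1 : ℕ) : ℝ) * (κ * d + M * d ^ 2) := htotal
      _ = ((N + 1 : ℕ) : ℝ) * d * (κ + M * d) := by ring
      _ = κ + M * d := by rw [hNd, one_mul]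
  have hlim := (tendsto_one_div_add_atTop_nhds_zero_nat (𝕜 := ℝ)).const_mul M |>.const_add κ
  simpa using ge_of_tendsto' hlim hpartition

variable [InnerProductSpace ℝ E] {f g w : E → ℝ} {s K : Set E} {x x₀ : E}

lemma abs_sub_sub_le_of_norm_sub_le {ξ : E → E} {A : E →L[ℝ] E} {h : E} {ε : ℝ}
    (hξ : ∀ y ∈ s, IsSubgradientOn f s (ξ y) y) (hmem : ∀ t ∈ Icc (0 : ℝ) 1, x + t • h ∈ s)
    (hA : ∀ t ∈ Icc (0 : ℝ) 1, ‖ξ (x + t • h) - ξ x - t • A h‖ ≤ ε * ‖h‖) :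
    |f (x + h) - f x - ⟪ξ x, h⟫ - 1 / 2 * ⟪A h, h⟫| ≤ ε * ‖h‖ ^ 2 := by
  set D : ℝ → ℝ := fun t => f (x + t • h) - t * ⟪ξ x, h⟫ - 1 / 2 * t ^ 2 * ⟪A h, h⟫ with hD
  have hslope : ∀ t ∈ Icc (0 : ℝ) 1,
      |⟪ξ (x + t • h), h⟫ - ⟪ξ x, h⟫ - t * ⟪A h, h⟫| ≤ ε * ‖h‖ ^ 2 := fun t ht => by
    rw [← real_inner_smul_left, ← inner_sub_left, ← inner_sub_left, sq, ← mul_assoc]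
    exact (abs_real_inner_le_norm _ _).trans (by gcongr; exact hA t ht)
  have hsecant : ∀ t ∈ Icc (0 : ℝ) 1, ∀ τ ∈ Icc (0 : ℝ) 1,
      f (x + t • h) + (τ - t) * ⟪ξ (x + t • h), h⟫ ≤ f (x + τ • h) := fun t ht τ hτ => by
    have := hξ _ (hmem t ht) _ (hmem τ hτ)
    rwa [add_sub_add_left_eq_sub, ← sub_smul, real_inner_smul_right] at this
  have hincrement : ‖D 1 - D 0‖ ≤ ε * ‖h‖ ^ 2 := by
    refine norm_sub_le_of_forall_norm_sub_le (M := 1 / 2 * |⟪A h, h⟫|) fun t τ h0 hle h1 => ?_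
    have ht : t ∈ Icc (0 : ℝ) 1 := ⟨h0, hle.trans h1⟩
    have hτ : τ ∈ Icc (0 : ℝ) 1 := ⟨h0.trans hle, h1⟩
    have hτt := sub_nonneg.2 hle
    have hlower := mul_le_mul_of_nonneg_left (abs_le.1 (hslope t ht)).1 hτt
    have hupper := mul_le_mul_of_nonneg_left (abs_le.1 (hslope τ hτ)).2 hτt
    have hquad := mul_le_mul_of_nonneg_left (le_abs_self ⟪A h, h⟫) (sq_nonneg (τ - t))
    rw [Real.norm_eq_abs, abs_le, hD]
    constructor <;> linarith [hsecant t ht τ hτ, hsecant τ hτ t ht]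
  convert hincrement using 1
  rw [Real.norm_eq_abs, hD]
  simp only [one_smul, zero_smul, add_zero]
  ring_nf

theorem isLittleO_of_hasFDerivAt_of_isSubgradientOn {ξ : E → E} {A : E →L[ℝ] E} (hs : s ∈ 𝓝 x)
    (hξ : ∀ y ∈ s, IsSubgradientOn f s (ξ y) y) (hA : HasFDerivAt ξ A x) :
    (fun h => f (x + h) - f x - ⟪ξ x, h⟫ - 1 / 2 * ⟪A h, h⟫) =o[𝓝 0] fun h => ‖h‖ ^ 2 := by
  refine isLittleO_iff.2 fun ε hε => ?_
  have hbound := (hasFDerivAt_iff_isLittleO_nhds_zero.1 hA).def hε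
  have htrans : Tendsto (fun h => x + h) (𝓝 0) (𝓝 x) := by
    simpa using (continuous_const_add x).tendsto 0
  obtain ⟨r, hr, hball⟩ := nhds_basis_ball.eventually_iff.1 (hbound.and (htrans hs))
  filter_upwards [ball_mem_nhds 0 hr] with h hh
  have hsegment : ∀ t ∈ Icc (0 : ℝ) 1, ‖t • h‖ ≤ ‖h‖ := fun t ht => by
    rw [norm_smul, Real.norm_of_nonneg ht.1]
    exact mul_le_of_le_one_left (norm_nonneg h) ht.2
  have hmem : ∀ t ∈ Icc (0 : ℝ) 1, t • h ∈ ball 0 r := fun t ht =>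
    mem_ball_zero_iff.2 ((hsegment t ht).trans_lt (mem_ball_zero_iff.1 hh))
  rw [Real.norm_eq_abs, norm_pow, norm_norm]
  refine abs_sub_sub_le_of_norm_sub_le hξ (fun t ht => (hball (hmem t ht)).2) fun t ht => ?_
  rw [← map_smul]
  exact (hball (hmem t ht)).1.trans (by gcongr; exact hsegment t ht)

lemma isUpperContactOn_of_isMaxOn {c : ℝ} {q : E}
    (h : IsMaxOn (fun y => w y - ⟪q, y - x₀⟫ - c * ‖y - x₀‖ ^ 2) s x) :
    IsUpperContactOn w s c (q + (2 * c) • (x - x₀)) x := by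
  intro y hy
  have hnorm : ‖y - x₀‖ ^ 2 = ‖y - x‖ ^ 2 + 2 * ⟪x - x₀, y - x⟫ + ‖x - x₀‖ ^ 2 := by
    rw [← sub_add_sub_cancel y x x₀, norm_add_sq_real, real_inner_comm]
  have hinner : ⟪q, y - x₀⟫ = ⟪q, y - x⟫ + ⟪q, x - x₀⟫ := by
    rw [← inner_add_right, sub_add_sub_cancel]
  have hyx := isMaxOn_iff.1 h y hy
  rw [hnorm, hinner] at hyx
  rw [inner_add_left, real_inner_smul_left]
  linarith

lemma IsUpperContactOn.exists_isUpperContactOn {c₁ c₂ : ℝ} {q₀ : E} (hK : IsCompact K)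
    (hw : ContinuousOn w K) (hx₀ : x₀ ∈ K) (h : IsUpperContactOn w K c₁ q₀ x₀) (q : E) :
    ∃ x ∈ K, (c₂ - c₁) * ‖x - x₀‖ ≤ ‖q - q₀‖ ∧
      IsUpperContactOn w K c₂ (q + (2 * c₂) • (x - x₀)) x := by
  obtain ⟨x, hx, hmax⟩ := hK.exists_isMaxOn ⟨x₀, hx₀⟩
    (f := fun y => w y - ⟪q, y - x₀⟫ - c₂ * ‖y - x₀‖ ^ 2) (by fun_prop)
  refine ⟨x, hx, ?_, isUpperContactOn_of_isMaxOn hmax⟩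
  rcases (norm_nonneg (x - x₀)).eq_or_lt with hzero | hpos
  · simp [← hzero]
  have hxx₀ := isMaxOn_iff.1 hmax x₀ hx₀
  have hinner := real_inner_le_norm (q₀ - q) (x - x₀)
  rw [inner_sub_left, norm_sub_rev] at hinner
  simp only [sub_self, inner_zero_right, norm_zero] at hxx₀
  refine le_of_mul_le_mul_right ?_ hpos
  linarith [h x hx]

theorem hausdorffMeasure_ball_inter_upperContactSet_ne_zero [FiniteDimensional ℝ E]
    [MeasurableSpace E] [BorelSpace E] {c₁ c₂ ρ : ℝ} {q₀ : E} {σ : E → E} {L : ℝ≥0}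
    (hK : IsCompact K) (hw : ContinuousOn w K) (hx₀ : x₀ ∈ K) (h : IsUpperContactOn w K c₁ q₀ x₀)
    (hc : c₁ < c₂) (hρ : 0 < ρ)
    (hσ : ∀ x ∈ ball x₀ ρ, ∀ p, IsUpperContactOn w K c₂ p x → σ x = p)
    (hL : LipschitzOnWith L σ (ball x₀ ρ ∩ upperContactSet w K c₂)) :
    μH[Module.finrank ℝ E] (ball x₀ ρ ∩ upperContactSet w K c₂) ≠ 0 := by
  set C := ball x₀ ρ ∩ upperContactSet w K c₂
  set τ : E → E := fun x => σ x - (2 * c₂) • (x - x₀) with hτ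
  have hτL : LipschitzOnWith (L + (‖2 * c₂‖₊ * (1 + 0))) τ C :=
    hL.sub (((lipschitzWith_smul (2 * c₂)).comp
      (LipschitzWith.id.sub (LipschitzWith.const x₀))).lipschitzOnWith)
  have hcover : ball q₀ ((c₂ - c₁) * ρ) ⊆ τ '' C := by
    intro q hq
    obtain ⟨x, -, hdist, hcontact⟩ := h.exists_isUpperContactOn hK hw hx₀ q (c₂ := c₂)
    have hxρ : x ∈ ball x₀ ρ := by
      rw [mem_ball_iff_norm] at hq ⊢
      exact lt_of_mul_lt_mul_left (hdist.trans_lt hq) (sub_nonneg.2 hc.le)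
    refine ⟨x, ⟨hxρ, _, hcontact⟩, ?_⟩
    simp only [hτ, hσ x hxρ _ hcontact, add_sub_cancel_right]
  intro hzero
  have himage := hτL.hausdorffMeasure_image_le (Nat.cast_nonneg (Module.finrank ℝ E))
  rw [hzero, mul_zero] at himage
  exact (measure_ball_pos μH[Module.finrank ℝ E] q₀ (mul_pos (sub_pos.2 hc) hρ)).not_ge
    ((measure_mono hcover).trans himage)

lemma exists_mem_upperContactSet_differentiableAt [FiniteDimensional ℝ E] {c₁ r : ℝ} {c₂ : ℝ≥0}
    {p₀ : E} {α β : E → E} (hr : 0 < r)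
    (hcont : ContinuousOn (fun y => f y + g y) (closedBall x₀ r))
    (hα : ∀ y ∈ ball x₀ r, IsSubgradientOn f (ball x₀ r) (α y) y)
    (hβ : ∀ y ∈ ball x₀ r, IsSubgradientOn g (ball x₀ r) (β y) y) (hc : c₁ < c₂)
    (h : IsUpperContactOn (fun y => f y + g y) (closedBall x₀ r) c₁ p₀ x₀) :
    ∃ x ∈ ball x₀ (r / 3) ∩ upperContactSet (fun y => f y + g y) (closedBall x₀ r) c₂,
      DifferentiableAt ℝ β x := by
  borelize E
  have hthird : ball x₀ (r / 3) ⊆ ball x₀ r := ball_subset_ball (by linarith)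
  set C := ball x₀ (r / 3) ∩ upperContactSet (fun y => f y + g y) (closedBall x₀ r) c₂
  have hcontact : ∀ z ∈ ball x₀ (r / 3), ∀ p,
      IsUpperContactOn (fun y => f y + g y) (closedBall x₀ r) c₂ p z →
      α z + β z = p ∧ IsUpperContactOn f (ball x₀ r) c₂ (α z) z ∧
        IsUpperContactOn g (ball x₀ r) c₂ (β z) z := fun z hz p hp =>
    (hp.mono ball_subset_closedBall).of_add c₂.2 (isOpen_ball.mem_nhds (hthird hz))
      (hα z (hthird hz)) (hβ z (hthird hz))
  have hαC : ∀ z ∈ C, ∀ y ∈ ball x₀ (r / 3), dist (α y) (α z) ≤ (4 * c₂ : ℝ≥0) * dist y z :=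
    fun z ⟨hz, p, hp⟩ y hy => (hα y (hthird hy)).dist_le_of_mem_ball hy hz (hα z (hthird hz))
      (hcontact z hz p hp).2.1
  have hβC : ∀ z ∈ C, ∀ y ∈ ball x₀ (r / 3), dist (β y) (β z) ≤ (4 * c₂ : ℝ≥0) * dist y z :=
    fun z ⟨hz, p, hp⟩ y hy => (hβ y (hthird hy)).dist_le_of_mem_ball hy hz (hβ z (hthird hz))
      (hcontact z hz p hp).2.2
  have hσC : LipschitzOnWith (4 * c₂ + 4 * c₂) (fun y => α y + β y) C :=
    (LipschitzOnWith.of_dist_le_mul fun y hy z hz => hαC z hz y hy.1).add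
      (LipschitzOnWith.of_dist_le_mul fun y hy z hz => hβC z hz y hy.1)
  have hμC : μH[Module.finrank ℝ E] C ≠ 0 :=
    hausdorffMeasure_ball_inter_upperContactSet_ne_zero (isCompact_closedBall x₀ r) hcont
      (mem_closedBall_self hr.le) h hc (by positivity) (fun x hx p hp => (hcontact x hx p hp).1) hσC
  by_contra! hno
  refine hμC (measure_mono_null ?_ (ae_iff.1
    (ae_differentiableAt_of_dist_le μH[Module.finrank ℝ E] isOpen_ball inter_subset_left hβC)))
  exact fun x hx hdiff => hno x hx (hdiff hx)

theorem exists_isUpperContactOn_and_isLittleO_of_convexOn [FiniteDimensional ℝ E] {c₁ c₂ : ℝ}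
    {p₀ : E} (hs : IsOpen s) (hx₀ : x₀ ∈ s) (hf : ConvexOn ℝ s f) (hg : ConvexOn ℝ s g)
    (hc₂ : 0 ≤ c₂) (hc : c₁ < c₂) (h : IsUpperContactOn (fun y => f y + g y) s c₁ p₀ x₀) :
    ∃ x ∈ s, ∃ p b, ∃ A : E →L[ℝ] E,
      (∃ t ∈ 𝓝 x, IsUpperContactOn (fun y => f y + g y) t c₂ p x) ∧
      (fun h => g (x + h) - g x - ⟪b, h⟫ - 1 / 2 * ⟪A h, h⟫) =o[𝓝 0] fun h => ‖h‖ ^ 2 := by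
  lift c₂ to ℝ≥0 using hc₂
  obtain ⟨r, hr, hsub⟩ := nhds_basis_closedBall.mem_iff.1 (hs.mem_nhds hx₀)
  have hball : ball x₀ r ⊆ s := ball_subset_closedBall.trans hsub
  choose! α hα using fun y => exists_isSubgradientOn (x := y) isOpen_ball
    (hf.subset hball (convex_ball x₀ r))
  choose! β hβ using fun y => exists_isSubgradientOn (x := y) isOpen_ball
    (hg.subset hball (convex_ball x₀ r))
  have hcont : ContinuousOn (fun y => f y + g y) (closedBall x₀ r) :=
    ((hf.continuousOn hs).add (hg.continuousOn hs)).mono hsub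
  obtain ⟨x, ⟨hx, p, hp⟩, hdiff⟩ :=
    exists_mem_upperContactSet_differentiableAt hr hcont hα hβ hc (h.mono hsub)
  have hxr : x ∈ ball x₀ r := ball_subset_ball (by linarith) hx
  have hnhds : ball x₀ r ∈ 𝓝 x := isOpen_ball.mem_nhds hxr
  exact ⟨x, hball hxr, p, β x, fderiv ℝ β x, ⟨_, hnhds, hp.mono ball_subset_closedBall⟩,
    isLittleO_of_hasFDerivAt_of_isSubgradientOn hnhds hβ hdiff.hasFDerivAt⟩

end Alexandrov

section Semiconvex

variable {E : Type*} [NormedAddCommGroup E] [InnerProductSpace ℝ E]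
  {u v w : E → ℝ} {s : Set E} {x x₀ : E}

/-- Near `x`, the function `u` becomes convex after adding a multiple of `‖y‖ ^ 2 / 2`. This is
local quasiconvexity in the sense of potential theory; Mathlib's `QuasiconvexOn` is the unrelated
condition that sublevel sets are convex. -/
def IsSemiconvexAt (u : E → ℝ) (x : E) : Prop :=
  ∃ lam : ℝ, ∃ B ∈ 𝓝 x, ConvexOn ℝ B fun y => u y + lam * (1 / 2 * ‖y‖ ^ 2)

lemma IsSemiconvexAt.exists_eventually_convexOn (hu : IsSemiconvexAt u x) :
    ∃ B ∈ 𝓝 x, ∀ᶠ m : ℝ in atTop, ConvexOn ℝ B fun y => u y + m * (1 / 2 * ‖y‖ ^ 2) := by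
  obtain ⟨lam, B, hB, hconv⟩ := hu
  refine ⟨B, hB, (eventually_ge_atTop lam).mono fun m hm => ?_⟩
  have hsq : ConvexOn ℝ B fun y => (m - lam) * (1 / 2 * ‖y‖ ^ 2) :=
    (((convexOn_norm hconv.1).pow (fun y _ => norm_nonneg y) 2).smul one_half_pos.le).smul
      (sub_nonneg.2 hm)
  refine (hconv.add hsq).congr fun y _ => ?_
  simp only [Pi.add_apply]
  ring

lemma IsSemiconvexAt.continuousAt [FiniteDimensional ℝ E] (hu : IsSemiconvexAt u x) :
    ContinuousAt u x := by
  obtain ⟨lam, B, hB, hconv⟩ := hu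
  have hcont := hconv.continuousOn_interior.continuousAt (interior_mem_nhds.2 hB)
  have hsq : ContinuousAt (fun y => lam * (1 / 2 * ‖y‖ ^ 2)) x := by fun_prop
  exact (hcont.sub hsq).congr (Eventually.of_forall fun y => add_sub_cancel_right _ _)

lemma isUpperContactOn_add_norm_sq_iff {c m : ℝ} {p : E} :
    IsUpperContactOn (fun y => w y + m * ‖y‖ ^ 2) s c p x ↔
      IsUpperContactOn w s (c - m) (p - (2 * m) • x) x := by
  refine forall₂_congr fun y _ => ?_
  have hnorm : ‖y‖ ^ 2 = ‖y - x‖ ^ 2 + 2 * ⟪x, y - x⟫ + ‖x‖ ^ 2 := by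
    conv_lhs => rw [← sub_add_cancel y x, norm_add_sq_real, real_inner_comm]
  rw [inner_sub_left, real_inner_smul_left]
  simp only [hnorm]
  constructor <;> intro h <;> linarith

theorem exists_isUpperContactOn_and_isLittleO [FiniteDimensional ℝ E] {c₁ c₂ : ℝ} {p₀ : E}
    (hu : IsSemiconvexAt u x₀) (hv : IsSemiconvexAt v x₀) (hs : s ∈ 𝓝 x₀) (hc : c₁ < c₂)
    (h : IsUpperContactOn (fun y => u y + v y) s c₁ p₀ x₀) :
    ∃ x, s ∈ 𝓝 x ∧ ∃ p b, ∃ A : E →L[ℝ] E,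
      (∃ t ∈ 𝓝 x, IsUpperContactOn (fun y => u y + v y) t c₂ p x) ∧
      (fun h => v (x + h) - v x - ⟪b, h⟫ - 1 / 2 * ⟪A h, h⟫) =o[𝓝 0] fun h => ‖h‖ ^ 2 := by
  obtain ⟨B₁, hB₁, hu⟩ := hu.exists_eventually_convexOn
  obtain ⟨B₂, hB₂, hv⟩ := hv.exists_eventually_convexOn
  obtain ⟨m, ⟨hum, hvm⟩, hm⟩ := ((hu.and hv).and (eventually_ge_atTop (-c₂))).exists
  obtain ⟨r, hr, hball⟩ := nhds_basis_ball.mem_iff.1 (inter_mem (inter_mem hB₁ hB₂) hs)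
  have hsum : (fun y => u y + m * (1 / 2 * ‖y‖ ^ 2) + (v y + m * (1 / 2 * ‖y‖ ^ 2))) =
      fun y => u y + v y + m * ‖y‖ ^ 2 := by
    ext y
    ring
  have hcontact : IsUpperContactOn (fun y => u y + v y + m * ‖y‖ ^ 2) (ball x₀ r) (c₁ + m)
      (p₀ + (2 * m) • x₀) x₀ :=
    isUpperContactOn_add_norm_sq_iff.2 (by simpa using h.mono fun y hy => (hball hy).2)
  obtain ⟨x, hx, p, b, A, ⟨t, ht, hp⟩, hexp⟩ :=
    exists_isUpperContactOn_and_isLittleO_of_convexOn isOpen_ball (mem_ball_self hr)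
      (hum.subset (fun y hy => (hball hy).1.1) (convex_ball x₀ r))
      (hvm.subset (fun y hy => (hball hy).1.2) (convex_ball x₀ r))
      (c₂ := c₂ + m) (by linarith) (add_lt_add_left hc m) (hsum ▸ hcontact)
  rw [hsum, isUpperContactOn_add_norm_sq_iff, add_sub_cancel_right] at hp
  refine ⟨x, mem_of_superset (isOpen_ball.mem_nhds hx) fun y hy => (hball hy).2,
    _, b - m • x, A - m • ContinuousLinearMap.id ℝ E, ⟨t, ht, hp⟩, hexp.congr_left fun h => ?_⟩
  simp only [norm_add_sq_real, inner_sub_left, real_inner_smul_left, sub_apply,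
    smul_apply, ContinuousLinearMap.id_apply, real_inner_self_eq_norm_sq]
  ring

end Semiconvex

section AffineMaps

variable {E : Type*} [NormedAddCommGroup E] [InnerProductSpace ℝ E] [FiniteDimensional ℝ E]

lemma exists_eq_add_inner (a : E →ᵃ[ℝ] ℝ) : ∃ q : E, ∀ x y, a y = a x + ⟪q, y - x⟫ := by
  refine ⟨(InnerProductSpace.toDual ℝ E).symm a.linear.toContinuousLinearMap, fun x y => ?_⟩
  rw [InnerProductSpace.toDual_symm_apply]
  have := a.linearMap_vsub y x
  simp only [vsub_eq_sub] at this
  simp [this]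

lemma exists_mem_interior_isUpperContactOn {w : E → ℝ} {K : Set E} {a : E →ᵃ[ℝ] ℝ} {x₁ : E}
    (hK : IsCompact K) (hw : ContinuousOn w K) (ha : ∀ x ∈ frontier K, w x ≤ a x) (hx₁ : x₁ ∈ K)
    (hlt : a x₁ < w x₁) :
    ∃ x₀ ∈ interior K, ∃ q, ∃ η > 0, IsUpperContactOn w K (-η) q x₀ := by
  obtain ⟨q, hq⟩ := exists_eq_add_inner a
  obtain ⟨R, hR⟩ := hK.isBounded.subset_closedBall x₁
  set η := (w x₁ - a x₁) / (R ^ 2 + 1)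
  have hη : 0 < η := div_pos (sub_pos.2 hlt) (by positivity)
  have hηR : η * (R ^ 2 + 1) = w x₁ - a x₁ := div_mul_cancel₀ _ (by positivity)
  obtain ⟨x₀, hx₀, hmax⟩ := hK.exists_isMaxOn ⟨x₁, hx₁⟩
    (f := fun y => w y - ⟪q, y - x₁⟫ - -η * ‖y - x₁‖ ^ 2) (by fun_prop)
  refine ⟨x₀, ?_, _, η, hη, isUpperContactOn_of_isMaxOn hmax⟩
  by_contra hint
  have hfrontier := ha x₀ ⟨subset_closure hx₀, hint⟩
  have hx₁x₀ := isMaxOn_iff.1 hmax x₁ hx₁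
  have hdist : ‖x₀ - x₁‖ ≤ R := mem_closedBall_iff_norm.1 (hR hx₀)
  have hηdist : η * ‖x₀ - x₁‖ ^ 2 ≤ η * R ^ 2 := by gcongr
  rw [hq x₁] at hfrontier
  simp only [sub_self, inner_zero_right, norm_zero] at hx₁x₀
  linarith

end AffineMaps

section QuadraticForms

variable {n : ℕ}

lemma bilin_eq_inner (A : Matrix (Fin n) (Fin n) ℝ) (v w : Euc n) :
    bilin A v w = ⟪v, Matrix.toEuclideanCLM (𝕜 := ℝ) A w⟫ := by
  simp only [bilin, PiLp.inner_apply, Matrix.ofLp_toEuclideanCLM, Matrix.mulVec, dotProduct,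
    RCLike.inner_apply, conj_trivial, Finset.sum_mul]
  exact Finset.sum_congr rfl fun i _ => Finset.sum_congr rfl fun j _ => by ring

lemma bilin_neg (A : Matrix (Fin n) (Fin n) ℝ) (v w : Euc n) : bilin (-A) v w = -bilin A v w := by
  simp [bilin]

lemma bilin_add_smul_symOne (S : SymMat n) (t : ℝ) (h : Euc n) :
    bilin (S + t • symOne n : SymMat n) h h = bilin S h h + t * ‖h‖ ^ 2 := by
  simp [bilin_eq_inner, symOne, inner_add_right, inner_smul_right]

lemma bilin_selfAdjointPart (A : Matrix (Fin n) (Fin n) ℝ) (h : Euc n) :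
    bilin (selfAdjointPart ℝ A : SymMat n) h h = bilin A h h := by
  rw [bilin_eq_inner, bilin_eq_inner, selfAdjointPart_apply_coe, map_smul, map_add, map_star,
    ContinuousLinearMap.star_eq_adjoint, smul_apply, add_apply, real_inner_smul_right,
    inner_add_right, ContinuousLinearMap.adjoint_inner_right, real_inner_comm h, ← two_mul,
    invOf_mul_cancel_left]

lemma isSymmetric_toEuclideanCLM (S : SymMat n) :
    (Matrix.toEuclideanCLM (𝕜 := ℝ) (S : Matrix (Fin n) (Fin n) ℝ)).IsSymmetric :=
  ContinuousLinearMap.isSelfAdjoint_iff_isSymmetric.1 (S.2.map _)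

lemma hasFDerivAt_half_inner_sub {E : Type*} [NormedAddCommGroup E] [InnerProductSpace ℝ E]
    {T : E →L[ℝ] E} (hT : T.IsSymmetric) (x y : E) :
    HasFDerivAt (fun y => 1 / 2 * ⟪y - x, T (y - x)⟫) (innerSL ℝ (T (y - x))) y := by
  have hsub : HasFDerivAt (fun y => y - x) (.id ℝ E) y := (hasFDerivAt_id y).sub_const x
  refine ((hsub.inner ℝ (T.hasFDerivAt.comp y hsub)).const_mul (1 / 2)).congr_fderiv ?_
  ext v
  have hsymm : ⟪y - x, T v⟫ = ⟪T (y - x), v⟫ := (hT _ _).symm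
  simp only [ContinuousLinearMap.coe_comp, smul_apply, Function.comp_apply,
    ContinuousLinearMap.prod_apply, fderivInnerCLM_apply, innerSL_apply_apply, smul_eq_mul,
    ContinuousLinearMap.id_apply, hsymm, real_inner_comm (T (y - x)) v]
  ring

lemma hasFDerivAt_innerSL_sub {E : Type*} [NormedAddCommGroup E] [InnerProductSpace ℝ E]
    (T : E →L[ℝ] E) (x y : E) :
    HasFDerivAt (fun y => innerSL ℝ (T (y - x))) ((innerSL ℝ).comp T) y := by
  have hsub : HasFDerivAt (fun y => y - x) (.id ℝ E) y := (hasFDerivAt_id y).sub_const x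
  exact ((innerSL ℝ).comp T).hasFDerivAt.comp y hsub

lemma contDiff_half_bilin_sub (S : Matrix (Fin n) (Fin n) ℝ) (x : Euc n) :
    ContDiff ℝ 2 fun y => 1 / 2 * bilin S (y - x) (y - x) := by
  simp only [bilin_eq_inner]
  have hsub : ContDiff ℝ 2 fun y => y - x := contDiff_id.sub contDiff_const
  exact contDiff_const.mul (hsub.inner ℝ ((ContinuousLinearMap.contDiff _).comp hsub))

lemma hessMat_half_bilin_sub (S : SymMat n) (x y : Euc n) :
    hessMat (fun y => 1 / 2 * bilin S (y - x) (y - x)) y = S := by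
  set T := Matrix.toEuclideanCLM (𝕜 := ℝ) (S : Matrix (Fin n) (Fin n) ℝ)
  have hfderiv : fderiv ℝ (fun y => 1 / 2 * bilin S (y - x) (y - x)) =
      fun y => innerSL ℝ (T (y - x)) := funext fun y => by
    simp only [bilin_eq_inner]
    exact (hasFDerivAt_half_inner_sub (isSymmetric_toEuclideanCLM S) x y).fderiv
  ext i j
  have hsymm : ⟪T (EuclideanSpace.single i 1), EuclideanSpace.single j 1⟫ =
      ⟪EuclideanSpace.single i 1, T (EuclideanSpace.single j 1)⟫ :=
    isSymmetric_toEuclideanCLM S _ _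
  rw [hessMat, iteratedFDeriv_two_apply, hfderiv,
    (hasFDerivAt_innerSL_sub T x y).fderiv]
  simp only [ContinuousLinearMap.comp_apply, Matrix.cons_val_zero, Matrix.cons_val_one,
    innerSL_apply_apply]
  rw [hsymm, ← bilin_eq_inner]
  simp [bilin]

end QuadraticForms

section Subaffine

variable {n : ℕ} {X : Set (Euc n)} {u v w : Euc n → ℝ} {x : Euc n}

lemma SubaffineOn.le_of_forall_mem_sphere {p : Euc n} {b ρ : ℝ}
    (hw : SubaffineOn X fun y => (w y : EReal)) (hρ : 0 < ρ) (hX : closedBall x ρ ⊆ X)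
    (h : ∀ y ∈ sphere x ρ, w y ≤ b + ⟪p, y - x⟫) : w x ≤ b := by
  let a : Euc n →ᵃ[ℝ] ℝ :=
    (innerSL ℝ p).toLinearMap.toAffineMap + AffineMap.const ℝ (Euc n) (b - ⟪p, x⟫)
  have ha (y : Euc n) : a y = b + ⟪p, y - x⟫ := by
    rw [inner_sub_right]
    simp only [a, AffineMap.coe_add, Pi.add_apply, LinearMap.coe_toAffineMap,
      AffineMap.const_apply, ContinuousLinearMap.coe_coe, innerSL_apply_apply]
    ring
  have hx := hw _ (isCompact_closedBall x ρ) hX a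
    (fun y hy => EReal.coe_le_coe_iff.2 (ha y ▸ h y (frontier_closedBall_subset_sphere hy)))
    x (mem_closedBall_self hρ.le)
  simpa [ha] using hx

lemma mem_interior_of_isTypeF {G : Set (SymMat n)} {S : SymMat n} {p : Euc n} {δ : ℝ}
    (hu : IsTypeF G X fun y => (u y : EReal)) (hX : X ∈ 𝓝 x) (hδ : 0 < δ)
    (h : ∀ᶠ h in 𝓝 0, u (x + h) ≤ u x + ⟪p, h⟫ + 1 / 2 * bilin S h h - δ * ‖h‖ ^ 2) :
    S ∈ interior G := by
  by_contra hS
  have htest : IsTypeFC2 (dirDual G) X fun y => 1 / 2 * bilin (-S : SymMat n) (y - x) (y - x) :=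
    ⟨(contDiff_half_bilin_sub _ x).contDiffOn, fun y _ =>
      ⟨-S, by simpa [dirDual] using hS, (hessMat_half_bilin_sub (-S) x y).symm⟩⟩
  have htrans : Tendsto (fun y => y - x) (𝓝 x) (𝓝 0) := tendsto_sub_nhds_zero_iff.2 tendsto_id
  obtain ⟨ρ, hρ, hball⟩ :=
    nhds_basis_closedBall.eventually_iff.1 ((htrans.eventually h).and hX)
  have hsub := hu _ htest
  simp only [← EReal.coe_add] at hsub
  have hle := hsub.le_of_forall_mem_sphere (b := u x - δ * ρ ^ 2) (p := p) hρ
    (fun y hy => (hball hy).2) fun y hy => by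
      have hy' := (hball (sphere_subset_closedBall hy)).1
      rw [add_sub_cancel, mem_sphere_iff_norm.1 hy] at hy'
      rw [NegMemClass.coe_neg, bilin_neg]
      linarith
  simp only [sub_self, bilin_eq_inner, inner_zero_left, mul_zero, add_zero] at hle
  have : 0 < δ * ρ ^ 2 := by positivity
  linarith

theorem exists_isUpperContactOn_and_twiceDiffWithHessAt {s : Set (Euc n)} {c₁ c₂ : ℝ}
    {x₀ p₀ : Euc n} (hu : IsSemiconvexAt u x₀) (hv : IsSemiconvexAt v x₀) (hs : s ∈ 𝓝 x₀)
    (hc : c₁ < c₂) (h : IsUpperContactOn (fun y => u y + v y) s c₁ p₀ x₀) :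
    ∃ x, s ∈ 𝓝 x ∧ ∃ p, ∃ N : SymMat n, TwiceDiffWithHessAt v x N ∧
      ∀ᶠ h in 𝓝 0, u (x + h) + v (x + h) ≤ u x + v x + ⟪p, h⟫ + c₂ * ‖h‖ ^ 2 := by
  obtain ⟨x, hx, p, b, A, ⟨t, ht, hp⟩, hexp⟩ :=
    exists_isUpperContactOn_and_isLittleO hu hv hs hc h
  refine ⟨x, hx, p, selfAdjointPart ℝ ((Matrix.toEuclideanCLM (𝕜 := ℝ)).symm A), ⟨b, ?_⟩, ?_⟩
  · refine hexp.congr_left fun h => ?_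
    rw [bilin_selfAdjointPart, bilin_eq_inner, StarAlgEquiv.apply_symm_apply,
      real_inner_comm (A h) h]
  · have htrans : Tendsto (fun h => x + h) (𝓝 0) (𝓝 x) := by
      simpa using (continuous_const_add x).tendsto 0
    filter_upwards [htrans ht] with h hh
    simpa using hp _ hh

lemma not_eventually_add_le_of_isTypeF {F : Set (SymMat n)} {N : SymMat n} {p : Euc n} {η : ℝ}
    (hu : IsTypeF F X fun x => (u x : EReal)) (hv : IsTypeF (dirDual F) X fun x => (v x : EReal))
    (hX : X ∈ 𝓝 x) (hN : TwiceDiffWithHessAt v x N) (hη : 0 < η) :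
    ¬ ∀ᶠ h in 𝓝 0, u (x + h) + v (x + h) ≤ u x + v x + ⟪p, h⟫ + -(4 * η) * ‖h‖ ^ 2 := by
  intro hcontact
  obtain ⟨b, hb⟩ := hN
  have hexp : ∀ᶠ h in 𝓝 0, |v (x + h) - v x - ⟪b, h⟫ - 1 / 2 * bilin N h h| ≤ η * ‖h‖ ^ 2 := by
    simpa using hb.def hη
  have hdual : N + (4 * η) • symOne n ∈ interior (dirDual F) := by
    refine mem_interior_of_isTypeF hv hX hη (p := b) (hexp.mono fun h hh => ?_)
    rw [bilin_add_smul_symOne]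
    linarith [(abs_le.1 hh).2]
  refine interior_subset hdual (mem_interior_of_isTypeF hu hX hη (p := p - b) ?_)
  filter_upwards [hexp, hcontact] with h hh hle
  rw [NegMemClass.coe_neg, bilin_neg, bilin_add_smul_symOne, inner_sub_left]
  linarith [(abs_le.1 hh).1]

theorem subaffine_theorem_quasiconvex_general (F : Set (SymMat n))
    (hu_qc : ∀ x ∈ X, IsSemiconvexAt u x) (hv_qc : ∀ x ∈ X, IsSemiconvexAt v x)
    (hu : IsTypeF F X fun x => (u x : EReal)) (hv : IsTypeF (dirDual F) X fun x => (v x : EReal)) :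
    SubaffineOn X fun x => ((u x + v x : ℝ) : EReal) := by
  intro K hK hKX a ha x₁ hx₁
  by_contra! hlt
  simp only [EReal.coe_le_coe_iff, EReal.coe_lt_coe_iff] at ha hlt
  have hcont : ContinuousOn (fun y => u y + v y) K := fun x hx =>
    ((hu_qc x (hKX hx)).continuousAt.add (hv_qc x (hKX hx)).continuousAt).continuousWithinAt
  obtain ⟨x₀, hx₀, q, η, hη, hq⟩ := exists_mem_interior_isUpperContactOn hK hcont ha hx₁ hlt
  have hx₀X := hKX (interior_subset hx₀)
  obtain ⟨x, hKx, p, N, hN, hp⟩ := exists_isUpperContactOn_and_twiceDiffWithHessAt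
    (hu_qc x₀ hx₀X) (hv_qc x₀ hx₀X) (mem_interior_iff_mem_nhds.1 hx₀)
    (c₂ := -(4 * (η / 8))) (by linarith) hq
  exact not_eventually_add_le_of_isTypeF hu hv (mem_of_superset hKx hKX) hN (by positivity) hp

end Subaffine

/-- Corollary 7.4, the Subaffine Theorem for quasiconvex functions. -/
theorem subaffine_theorem_quasiconvex {n : ℕ} (F : Set (SymMat n)) (hF : IsDirichletSet F)
    (X : Set (Euc n)) (hX : IsOpen X) (lam : ℝ) (hlam : 0 < lam) (u v : Euc n → ℝ)
    (hu_qc : ∀ x ∈ X, ∃ B, IsOpen B ∧ Convex ℝ B ∧ x ∈ B ∧ B ⊆ X ∧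
        ConvexOn ℝ B (fun y => u y + lam * (1/2 * ‖y‖ ^ 2)))
    (hv_qc : ∀ x ∈ X, ∃ B, IsOpen B ∧ Convex ℝ B ∧ x ∈ B ∧ B ⊆ X ∧
        ConvexOn ℝ B (fun y => v y + lam * (1/2 * ‖y‖ ^ 2)))
    (hu : IsTypeF F X (fun x => (u x : EReal)))
    (hv : IsTypeF (dirDual F) X (fun x => (v x : EReal))) :
    SubaffineOn X (fun x => ((u x + v x : ℝ) : EReal)) := by
  refine subaffine_theorem_quasiconvex_general F (fun x hx => ?_) (fun x hx => ?_) hu hv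
  · obtain ⟨B, hB, -, hxB, -, hconv⟩ := hu_qc x hx
    exact ⟨lam, B, hB.mem_nhds hxB, hconv⟩
  · obtain ⟨B, hB, -, hxB, -, hconv⟩ := hv_qc x hx
    exact ⟨lam, B, hB.mem_nhds hxB, hconv⟩
end
end

section
/- Let F ⊂ Sym²(ℝⁿ) be a Dirichlet set, X ⊂ ℝⁿ open, and u a function of type F on X with |u| ≤ N on X for some N > 0. For ε > 0 set δ = √(2εN), define the sup-convolution u^ε(x) = sup_{y ∈ X} ( u(y) − (1/ε)|x − y|² ) for x ∈ ℝⁿ, and set X_δ = {x ∈ X : dist(x, ℝⁿ ∖ X) > δ}. Then: (1) for every x ∈ X, the map ε ↦ u^ε(x) is nondecreasing in ε and u^ε(x) → u(x) as ε → 0⁺; (2) the function x ↦ u^ε(x) + (1/ε)|x|² is convex on ℝⁿ (so u^ε is quasiconvex); (3) the restriction of u^ε to X_δ is of type F on X_δ. -/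
open Set Metric Filter MeasureTheory Asymptotics
open scoped Topology BigOperators RealInnerProductSpace

noncomputable section

/-!
For `x ∈ X_δ` the supremum defining `u^ε(x)` may be taken over the points `x + z` with `‖z‖ ≤
δ`, since elsewhere the penalty exceeds the oscillation of `u`. Hence on `X_δ` the function
`u^ε` is a supremum of translates of `u` lowered by constants, and being of type `F` is
preserved by translations, constants and suprema. The delicate point is restriction to a
smaller open set, where more test functions have to be admitted: if `u + v` exceeds an affine
function at a point of a compact set but not on its frontier, then adding `η‖x‖²` produces a
strict interior maximum, and there `v` can be replaced by its second-order Taylor polynomial,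
which is a test function on all of `X`. Convexity holds because `u^ε(x) + (1/ε)‖x‖²` is a
supremum of affine functions of `x`.
-/

section SecondOrder

variable {E G : Type*} [NormedAddCommGroup E] [NormedSpace ℝ E]
  [NormedAddCommGroup G] [NormedSpace ℝ G]

lemma hasFDerivAt_half_quadratic {B : E →L[ℝ] E →L[ℝ] G} (hB : ∀ x y, B x y = B y x) (x₀ x : E) :
    HasFDerivAt (fun y => (1 / 2 : ℝ) • B (y - x₀) (y - x₀)) (B (x - x₀)) x := by
  have hsub : HasFDerivAt (fun y => y - x₀) (.id ℝ E) x := (hasFDerivAt_id x).sub_const x₀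
  refine (((B.hasFDerivAt.comp x hsub).clm_apply hsub).const_smul (1 / 2 : ℝ)).congr_fderiv ?_
  ext z
  simp only [one_div, FunLike.coe_smul, Pi.smul_apply, add_apply,
    ContinuousLinearMap.comp_apply, ContinuousLinearMap.flip_apply, ContinuousLinearMap.id_apply,
    Function.comp_apply, hB z]
  module

lemma fderiv_fderiv_half_quadratic {B : E →L[ℝ] E →L[ℝ] G} (hB : ∀ x y, B x y = B y x)
    (x₀ x : E) : fderiv ℝ (fderiv ℝ fun y => (1 / 2 : ℝ) • B (y - x₀) (y - x₀)) x = B := by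
  have hgrad : (fderiv ℝ fun y => (1 / 2 : ℝ) • B (y - x₀) (y - x₀)) = fun y => B (y - x₀) :=
    funext fun y => (hasFDerivAt_half_quadratic hB x₀ y).fderiv
  rw [hgrad, fderiv_comp_sub, B.fderiv]

lemma isLittleO_second_order_taylor {v : E → G} {x : E} (hv : ContDiffAt ℝ 2 v x) :
    (fun h => v (x + h) - v x - fderiv ℝ v x h - (1 / 2 : ℝ) • fderiv ℝ (fderiv ℝ v) x h h)
      =o[𝓝 0] fun h => ‖h‖ ^ 2 := by
  have hsymm : IsSymmSndFDerivAt ℝ v x := hv.isSymmSndFDerivAt (by simp)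
  set B := fderiv ℝ (fderiv ℝ v) x
  have hdiff : ∀ᶠ y in 𝓝 x, DifferentiableAt ℝ v y :=
    (hv.eventually (by simp)).mono fun y hy => hy.differentiableAt two_ne_zero
  have hgrad : HasFDerivAt (fderiv ℝ v) B x :=
    ((hv.fderiv_right (m := 1) le_rfl).differentiableAt one_ne_zero).hasFDerivAt
  refine isLittleO_iff.2 fun c hc => ?_
  obtain ⟨r, hr, hball⟩ :=
    Metric.eventually_nhds_iff_ball.1 (hdiff.and (hgrad.isLittleO.def hc))
  filter_upwards [ball_mem_nhds 0 hr] with h hh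
  have hball' : ∀ y ∈ closedBall x ‖h‖, y ∈ ball x r := fun y hy =>
    closedBall_subset_ball (mem_ball_zero_iff.1 hh) hy
  -- The mean value inequality applies to `v` minus its quadratic part, whose derivative varies by
  -- at most `c * ‖h‖`.
  have hmv := (convex_closedBall x ‖h‖).norm_image_sub_le_of_norm_hasFDerivWithin_le'
    (f := fun y => v y - (1 / 2 : ℝ) • B (y - x) (y - x)) (f' := fun y => fderiv ℝ v y - B (y - x))
    (φ := fderiv ℝ v x) (C := c * ‖h‖)
    (fun y hy => ((hball y (hball' y hy)).1.hasFDerivAt.sub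
      (hasFDerivAt_half_quadratic hsymm x y)).hasFDerivWithinAt)
    (fun y hy => by
      rw [sub_right_comm]
      exact (hball y (hball' y hy)).2.trans
        (mul_le_mul_of_nonneg_left (mem_closedBall_iff_norm.1 hy) hc.le))
    (mem_closedBall_self (norm_nonneg h)) (y := x + h) (by simp)
  simp only [add_sub_cancel_left, sub_self, map_zero, smul_zero, sub_zero] at hmv
  calc _ = ‖v (x + h) - (1 / 2 : ℝ) • B h h - v x - fderiv ℝ v x h‖ := by congr 1; abel
    _ ≤ c * ‖h‖ * ‖h‖ := hmv
    _ = c * ‖‖h‖ ^ 2‖ := by rw [norm_pow, norm_norm]; ring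

end SecondOrder

lemma exists_isMaxOn_add_sq_norm_mem_interior {E : Type*} [SeminormedAddCommGroup E]
    {K : Set E} (hK : IsCompact K) {w : E → ℝ} (hw : UpperSemicontinuousOn w K)
    (hfr : ∀ x ∈ frontier K, w x ≤ 0) {x₁ : E} (hx₁ : x₁ ∈ K) (hpos : 0 < w x₁) :
    ∃ η > 0, ∃ x₀ ∈ interior K, IsMaxOn (fun x => w x + η * ‖x‖ ^ 2) K x₀ := by
  obtain ⟨R, hR⟩ := hK.isBounded.exists_norm_le
  set η := w x₁ / (R ^ 2 + 1) with hη_def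
  have hη : 0 < η := by positivity
  have hηR : η * R ^ 2 < w x₁ := by
    rw [hη_def, div_mul_eq_mul_div, div_lt_iff₀ (by positivity)]
    linarith
  have hsq : Continuous fun x : E => η * ‖x‖ ^ 2 := by fun_prop
  obtain ⟨x₀, hx₀, hmax⟩ :=
    (hw.add (hsq.upperSemicontinuous.upperSemicontinuousOn K)).exists_isMaxOn ⟨x₁, hx₁⟩ hK
  refine ⟨η, hη, x₀, by_contra fun hnot => ?_, hmax⟩
  have hw₀ : w x₀ ≤ 0 := hfr x₀ ⟨subset_closure hx₀, hnot⟩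
  have hle : w x₁ + η * ‖x₁‖ ^ 2 ≤ w x₀ + η * ‖x₀‖ ^ 2 := hmax hx₁
  have hx₀R : η * ‖x₀‖ ^ 2 ≤ η * R ^ 2 := by gcongr; exact hR x₀ hx₀
  have : 0 ≤ η * ‖x₁‖ ^ 2 := by positivity
  linarith

section TypeF

variable {n : ℕ} {F : Set (SymMat n)} {X : Set (Euc n)} {u : Euc n → ℝ}

lemma hessMat_apply (v : Euc n → ℝ) (x : Euc n) (i j : Fin n) :
    hessMat v x i j = fderiv ℝ (fderiv ℝ v) x (EuclideanSpace.single i 1)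
      (EuclideanSpace.single j 1) := by
  simp [hessMat, iteratedFDeriv_two_apply]

lemma hessMat_comp_sub (v : Euc n → ℝ) (z x : Euc n) :
    hessMat (fun y => v (y - z)) x = hessMat v (x - z) := by
  ext i j
  rw [hessMat, iteratedFDeriv_comp_sub, hessMat]

lemma isTypeF_coe_iff :
    IsTypeF F X (fun x => (u x : EReal)) ↔
      ∀ v, IsTypeFC2 (dirDual F) X v → ∀ K, IsCompact K → K ⊆ X → ∀ a : Euc n →ᵃ[ℝ] ℝ,
        (∀ x ∈ frontier K, u x + v x ≤ a x) → ∀ x ∈ K, u x + v x ≤ a x := by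
  simp only [IsTypeF, SubaffineOn, ← EReal.coe_add, EReal.coe_le_coe_iff]

lemma IsTypeF.sub_const (hu : IsTypeF F X (fun x => (u x : EReal))) (c : ℝ) :
    IsTypeF F X (fun x => ((u x - c : ℝ) : EReal)) := by
  rw [isTypeF_coe_iff] at hu ⊢
  intro v hv K hK hKX a hfr x hx
  have hle := hu v hv K hK hKX (a + AffineMap.const ℝ (Euc n) c)
    (fun y hy => by simpa [sub_add_eq_add_sub] using hfr y hy) x hx
  simpa [sub_add_eq_add_sub] using hle

lemma isTypeF_of_isLUB {ι : Type*} {f : ι → Euc n → ℝ}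
    (hf : ∀ i, IsTypeF F X (fun x => (f i x : EReal)))
    (hu : ∀ x ∈ X, IsLUB (range fun i => f i x) (u x)) :
    IsTypeF F X (fun x => (u x : EReal)) := by
  simp only [isTypeF_coe_iff] at hf ⊢
  intro v hv K hK hKX a hfr x hx
  have hfu : ∀ i, ∀ y ∈ K, f i y ≤ u y := fun i y hy => (hu y (hKX hy)).1 (mem_range_self i)
  rw [← le_sub_iff_add_le, isLUB_le_iff (hu x (hKX hx)), mem_upperBounds, forall_mem_range]
  refine fun i => le_sub_iff_add_le.2 (hf i v hv K hK hKX a (fun y hy => ?_) x hx)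
  linarith [hfr y hy, hfu i y (hK.isClosed.frontier_subset hy)]

lemma IsTypeFC2.comp_sub_right {v : Euc n → ℝ} {z : Euc n}
    (hv : IsTypeFC2 F ((· + z) ⁻¹' X) v) : IsTypeFC2 F X (fun x => v (x - z)) := by
  have hmem : ∀ x ∈ X, x - z ∈ (· + z) ⁻¹' X := fun x hx => by simpa using hx
  refine ⟨hv.1.comp (by fun_prop) hmem, fun x hx => ?_⟩
  rw [hessMat_comp_sub]
  exact hv.2 _ (hmem x hx)

lemma IsTypeF.comp_add_right {w : Euc n → EReal} (hw : IsTypeF F X w) (z : Euc n) :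
    IsTypeF F ((· + z) ⁻¹' X) (fun x => w (x + z)) := by
  intro v hv K hK hKX a hfr x hx
  let τ : Euc n ≃ₜ Euc n := Homeomorph.addRight z
  have hfr' : ∀ y ∈ frontier (τ '' K), w y + v (y - z) ≤ a (-z +ᵥ y) := by
    rw [← τ.image_frontier, forall_mem_image]
    intro y hy
    simpa [τ] using hfr y hy
  have hle := hw _ hv.comp_sub_right (τ '' K) (hK.image τ.continuous) (image_subset_iff.2 hKX)
    (a.comp (AffineEquiv.constVAdd ℝ (Euc n) (-z)).toAffineMap) hfr' (τ x) (mem_image_of_mem τ hx)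
  simpa [τ] using hle

lemma IsTypeF.not_eventually_add_half_quadratic_le
    (hu : IsTypeF F X (fun x => (u x : EReal))) {x₀ : Euc n} (hX : X ∈ 𝓝 x₀)
    {B : Euc n →L[ℝ] Euc n →L[ℝ] ℝ} (hB : ∀ x y, B x y = B y x)
    (hBF : ∃ A ∈ dirDual F, ∀ i j, (A : Matrix (Fin n) (Fin n) ℝ) i j =
      B (EuclideanSpace.single i 1) (EuclideanSpace.single j 1))
    (l : Euc n →L[ℝ] ℝ) {η : ℝ} (hη : 0 < η) :
    ¬ ∀ᶠ h in 𝓝 0, u (x₀ + h) + (1 / 2 : ℝ) • B h h ≤ u x₀ + l h - η * ‖h‖ ^ 2 := by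
  intro hmax
  obtain ⟨A, hA, hAB⟩ := hBF
  have hq : IsTypeFC2 (dirDual F) X (fun y => (1 / 2 : ℝ) • B (y - x₀) (y - x₀)) := by
    refine ⟨by fun_prop, fun x _ => ⟨A, hA, ?_⟩⟩
    ext i j
    rw [hAB, hessMat_apply, fderiv_fderiv_half_quadratic hB]
  obtain ⟨r, hr, hball⟩ := Metric.nhds_basis_closedBall.mem_iff.1
    (inter_mem ((tendsto_sub_nhds_zero_iff.2 tendsto_id) hmax) hX)
  -- On the sphere of radius `r` the sum is at most this affine function, which at the centre falls
  -- short of `u x₀` by `η * r ^ 2`.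
  let a : Euc n →ᵃ[ℝ] ℝ := (l : Euc n →ₗ[ℝ] ℝ).toAffineMap +
    AffineMap.const ℝ (Euc n) (u x₀ - l x₀ - η * r ^ 2)
  have ha : ∀ x, a x = l x + (u x₀ - l x₀ - η * r ^ 2) := fun x => rfl
  have hsphere : ∀ x ∈ frontier (closedBall x₀ r),
      u x + (1 / 2 : ℝ) • B (x - x₀) (x - x₀) ≤ a x := fun x hx => by
    have hx' : x ∈ sphere x₀ r := frontier_closedBall_subset_sphere hx
    have hle : u (x₀ + (x - x₀)) + (1 / 2 : ℝ) • B (x - x₀) (x - x₀) ≤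
        u x₀ + l (x - x₀) - η * ‖x - x₀‖ ^ 2 := (hball (sphere_subset_closedBall hx')).1
    rw [add_sub_cancel, map_sub l, mem_sphere_iff_norm.1 hx'] at hle
    rw [ha]
    linarith
  have hcentre := isTypeF_coe_iff.1 hu _ hq (closedBall x₀ r) (isCompact_closedBall x₀ r)
    (hball.trans inter_subset_right) a hsphere x₀ (mem_closedBall_self hr.le)
  rw [sub_self, map_zero, smul_zero, ha] at hcentre
  have : 0 < η * r ^ 2 := by positivity
  linarith

lemma IsTypeF.not_eventually_add_le (hu : IsTypeF F X (fun x => (u x : EReal)))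
    {x₀ : Euc n} (hX : X ∈ 𝓝 x₀) {v : Euc n → ℝ} (hv : ContDiffAt ℝ 2 v x₀)
    (hvF : ∃ A ∈ dirDual F, (A : Matrix (Fin n) (Fin n) ℝ) = hessMat v x₀)
    (l : Euc n →L[ℝ] ℝ) {η : ℝ} (hη : 0 < η) :
    ¬ ∀ᶠ h in 𝓝 0, u (x₀ + h) + v (x₀ + h) ≤ u x₀ + v x₀ + l h - η * ‖h‖ ^ 2 := by
  intro hmax
  obtain ⟨A, hA, hAv⟩ := hvF
  refine hu.not_eventually_add_half_quadratic_le hX (hv.isSymmSndFDerivAt (by simp))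
    ⟨A, hA, fun i j => by rw [hAv, hessMat_apply]⟩ (l - fderiv ℝ v x₀) (half_pos hη) ?_
  have htaylor := (isLittleO_second_order_taylor hv).def (half_pos hη)
  filter_upwards [hmax, htaylor] with h hle hrem
  rw [norm_pow, norm_norm, Real.norm_eq_abs] at hrem
  rw [smul_eq_mul] at hrem ⊢
  rw [sub_apply]
  linarith [(abs_le.1 hrem).1]

theorem IsTypeF.mono (hu : IsTypeF F X (fun x => (u x : EReal))) {Y : Set (Euc n)}
    (hY : IsOpen Y) (hYX : Y ⊆ X) (husc : UpperSemicontinuousOn u Y) :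
    IsTypeF F Y (fun x => (u x : EReal)) := by
  rw [isTypeF_coe_iff]
  intro v hv K hK hKY a hfr
  by_contra! ⟨x₁, hx₁, hlt⟩
  have hw : UpperSemicontinuousOn (fun x => u x + (v x - a x)) K :=
    (husc.mono hKY).add ((hv.1.continuousOn.mono hKY).sub
      a.continuous_of_finiteDimensional.continuousOn).upperSemicontinuousOn
  obtain ⟨η, hη, x₀, hx₀, hmax⟩ := exists_isMaxOn_add_sq_norm_mem_interior hK hw
    (fun x hx => by linarith [hfr x hx]) hx₁ (by linarith)
  have hx₀Y : Y ∈ 𝓝 x₀ := hY.mem_nhds (hKY (interior_subset hx₀))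
  refine hu.not_eventually_add_le (mem_of_superset hx₀Y hYX) (hv.1.contDiffAt hx₀Y)
    (hv.2 x₀ (mem_of_mem_nhds hx₀Y))
    (LinearMap.toContinuousLinearMap a.linear - (2 * η) • innerSL ℝ x₀) hη ?_
  have htendsto : Tendsto (x₀ + ·) (𝓝 0) (𝓝 x₀) := by
    simpa using (continuous_const_add x₀).tendsto 0
  filter_upwards [htendsto (mem_interior_iff_mem_nhds.1 hx₀)] with h hh
  have hle : u (x₀ + h) + (v (x₀ + h) - a (x₀ + h)) + η * ‖x₀ + h‖ ^ 2 ≤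
      u x₀ + (v x₀ - a x₀) + η * ‖x₀‖ ^ 2 := hmax hh
  have ha : a (x₀ + h) = a x₀ + a.linear h := by
    simpa [add_comm] using a.map_vadd x₀ h
  rw [norm_add_sq_real, ha] at hle
  simp only [sub_apply, FunLike.coe_smul, Pi.smul_apply, smul_eq_mul, innerSL_apply_apply,
    LinearMap.coe_toContinuousLinearMap']
  linarith

end TypeF

section SupConvolution

/-- The sup-convolution `u^ε(x) = sup_{y ∈ X} (u(y) - (1/ε) d(x, y)²)` of `u` over `X`, which
approximates `u` from above by quasiconvex functions. The supremum is real-valued, hence takes the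
junk value `0` when `X` is empty or the set of values is unbounded. -/
def supConvolution {E : Type*} [PseudoMetricSpace E] (X : Set E) (u : E → ℝ) (ε : ℝ) (x : E) : ℝ :=
  ⨆ y : X, (u y - 1 / ε * dist x y ^ 2)

section PseudoMetricSpace

variable {E : Type*} [PseudoMetricSpace E] {X : Set E} {u : E → ℝ} {ε : ℝ}

lemma bddAbove_range_sub_sq_dist (hu : BddAbove (u '' X)) (hε : 0 < ε) (x : E) :
    BddAbove (range fun y : X => u y - 1 / ε * dist x y ^ 2) := by
  obtain ⟨M, hM⟩ := hu
  refine ⟨M, forall_mem_range.2 fun y => ?_⟩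
  have : 0 ≤ 1 / ε * dist x y ^ 2 := by positivity
  linarith [hM (mem_image_of_mem u y.2)]

lemma le_supConvolution (hu : BddAbove (u '' X)) (hε : 0 < ε) (x : E) {y : E} (hy : y ∈ X) :
    u y - 1 / ε * dist x y ^ 2 ≤ supConvolution X u ε x :=
  le_ciSup (bddAbove_range_sub_sq_dist hu hε x) ⟨y, hy⟩

lemma supConvolution_le (hX : X.Nonempty) {x : E} {M : ℝ}
    (h : ∀ y ∈ X, u y - 1 / ε * dist x y ^ 2 ≤ M) : supConvolution X u ε x ≤ M :=
  have := hX.to_subtype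
  ciSup_le fun y => h y y.2

lemma le_supConvolution_self (hu : BddAbove (u '' X)) (hε : 0 < ε) {x : E} (hx : x ∈ X) :
    u x ≤ supConvolution X u ε x := by
  simpa using le_supConvolution hu hε x hx

lemma supConvolution_monotoneOn (hu : BddAbove (u '' X)) (x : E) :
    MonotoneOn (fun ε => supConvolution X u ε x) (Ioi 0) := by
  intro ε₁ (hε₁ : 0 < ε₁) ε₂ hε₂ hle
  refine ciSup_mono (bddAbove_range_sub_sq_dist hu hε₂ x) fun y => ?_
  gcongr

lemma tendsto_supConvolution (hu : BddAbove (u '' X)) {x : E} (hx : x ∈ X)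
    (husc : UpperSemicontinuousWithinAt u X x) :
    Tendsto (fun ε => supConvolution X u ε x) (𝓝[>] 0) (𝓝 (u x)) := by
  have ⟨M, hM⟩ := hu
  refine tendsto_order.2 ⟨fun c hc => ?_, fun c hc => ?_⟩
  · filter_upwards [self_mem_nhdsWithin] with ε hε
    exact hc.trans_le (le_supConvolution_self hu hε hx)
  obtain ⟨d, hud, hdc⟩ := exists_between hc
  obtain ⟨r, hr, hball⟩ := Metric.mem_nhdsWithin_iff.1 (husc d hud)
  have hpenalty : Tendsto (fun ε : ℝ => 1 / ε * r ^ 2) (𝓝[>] 0) atTop := by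
    simpa using tendsto_inv_nhdsGT_zero.atTop_mul_const (by positivity : 0 < r ^ 2)
  filter_upwards [self_mem_nhdsWithin, hpenalty.eventually_ge_atTop (M - d)] with ε (hε : 0 < ε) hεM
  refine (supConvolution_le ⟨x, hx⟩ fun y hy => ?_).trans_lt hdc
  rcases lt_or_ge (dist x y) r with hnear | hfar
  · have huy : u y < d := hball ⟨mem_ball'.2 hnear, hy⟩
    have : 0 ≤ 1 / ε * dist x y ^ 2 := by positivity
    linarith
  · have : 1 / ε * r ^ 2 ≤ 1 / ε * dist x y ^ 2 := by gcongr
    linarith [hM (mem_image_of_mem u hy)]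

lemma isLUB_supConvolution_closedBall (hε : 0 < ε) {δ : ℝ} (hδ : 0 ≤ δ) {x : E}
    (hX : closedBall x δ ⊆ X) (hosc : ∀ y ∈ X, u y ≤ u x + 1 / ε * δ ^ 2) :
    IsLUB ((fun y => u y - 1 / ε * dist x y ^ 2) '' closedBall x δ) (supConvolution X u ε x) := by
  have hx : x ∈ closedBall x δ := mem_closedBall_self hδ
  have hu : BddAbove (u '' X) := ⟨_, forall_mem_image.2 hosc⟩
  refine ⟨forall_mem_image.2 fun y hy => le_supConvolution hu hε x (hX hy), fun M hM => ?_⟩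
  rw [mem_upperBounds, forall_mem_image] at hM
  refine supConvolution_le ⟨x, hX hx⟩ fun y hy => ?_
  rcases le_or_gt (dist x y) δ with hnear | hfar
  · exact hM (mem_closedBall'.2 hnear)
  · have hxM : u x ≤ M := by simpa using hM hx
    have : 1 / ε * δ ^ 2 ≤ 1 / ε * dist x y ^ 2 := by gcongr
    linarith [hosc y hy]

end PseudoMetricSpace

lemma supConvolution_eq_sSup {E : Type*} [SeminormedAddCommGroup E] (X : Set E) (u : E → ℝ) (ε : ℝ)
    (x : E) : supConvolution X u ε x = sSup {t | ∃ y ∈ X, t = u y - 1 / ε * ‖x - y‖ ^ 2} := by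
  simp only [supConvolution, iSup, range, Subtype.exists, exists_prop, dist_eq_norm, eq_comm]

lemma isLUB_range_translates_supConvolution {E : Type*} [SeminormedAddCommGroup E] {X : Set E}
    {u : E → ℝ} {ε : ℝ} (hε : 0 < ε) {δ : ℝ} (hδ : 0 ≤ δ) {x : E}
    (hX : closedBall x δ ⊆ X) (hosc : ∀ y ∈ X, u y ≤ u x + 1 / ε * δ ^ 2) :
    IsLUB (range fun z : closedBall (0 : E) δ => u (x + z) - 1 / ε * ‖(z : E)‖ ^ 2)
      (supConvolution X u ε x) := by
  convert isLUB_supConvolution_closedBall hε hδ hX hosc using 1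
  rw [← add_zero x, ← vadd_eq_add, ← vadd_closedBall, ← image_vadd, image_image, image_eq_range]
  simp

lemma convexOn_ciSup {E ι : Type*} [AddCommMonoid E] [SMul ℝ E] [Nonempty ι] {s : Set E}
    {f : ι → E → ℝ} (hf : ∀ i, ConvexOn ℝ s (f i))
    (hbdd : ∀ x ∈ s, BddAbove (range fun i => f i x)) : ConvexOn ℝ s (fun x => ⨆ i, f i x) := by
  refine ⟨(hf (Classical.arbitrary ι)).1, fun x hx y hy a b ha hb hab => ciSup_le fun i => ?_⟩
  refine ((hf i).2 hx hy ha hb hab).trans ?_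
  gcongr
  exacts [le_ciSup (hbdd x hx) i, le_ciSup (hbdd y hy) i]

lemma convexOn_supConvolution_add_sq_norm {E : Type*} [NormedAddCommGroup E]
    [InnerProductSpace ℝ E] {X : Set E} {u : E → ℝ} (hu : BddAbove (u '' X)) {ε : ℝ} (hε : 0 < ε) :
    ConvexOn ℝ univ (fun x => supConvolution X u ε x + 1 / ε * ‖x‖ ^ 2) := by
  rcases X.eq_empty_or_nonempty with rfl | hX
  · simpa [supConvolution] using
      (convexOn_univ_norm.pow (fun _ _ => norm_nonneg _) 2).smul (inv_nonneg.2 hε.le)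
  have := hX.to_subtype
  have hsup : ∀ x, supConvolution X u ε x + 1 / ε * ‖x‖ ^ 2 =
      ⨆ y : X, (u y - 1 / ε * dist x y ^ 2 + 1 / ε * ‖x‖ ^ 2) := fun x =>
    ciSup_add (bddAbove_range_sub_sq_dist hu hε x) _
  simp only [hsup]
  refine convexOn_ciSup (fun y => ?_) fun x _ => ?_
  · have haffine : ∀ x : E, u y - 1 / ε * dist x (y : E) ^ 2 + 1 / ε * ‖x‖ ^ 2 =
        (2 / ε) • innerSL ℝ (y : E) x + (u y - 1 / ε * ‖(y : E)‖ ^ 2) := fun x => by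
      rw [dist_eq_norm, norm_sub_sq_real, innerSL_apply_apply, real_inner_comm, smul_eq_mul]
      ring
    simp only [haffine]
    exact (((2 / ε) • innerSL ℝ (y : E)).toLinearMap.convexOn convex_univ).add_const _
  · obtain ⟨M, hM⟩ := bddAbove_range_sub_sq_dist hu hε x
    exact ⟨M + 1 / ε * ‖x‖ ^ 2, forall_mem_range.2 fun y =>
      add_le_add_left (hM (mem_range_self y)) _⟩

end SupConvolution

theorem IsTypeF.supConvolution {n : ℕ} {F : Set (SymMat n)} {X : Set (Euc n)} {u : Euc n → ℝ}
    (hu : IsTypeF F X (fun x => (u x : EReal))) (husc : UpperSemicontinuousOn u X)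
    {ε δ : ℝ} (hε : 0 < ε) (hδ : 0 ≤ δ) (hosc : ∀ x ∈ X, ∀ y ∈ X, u y ≤ u x + 1 / ε * δ ^ 2)
    {Y : Set (Euc n)} (hY : IsOpen Y) (hYX : ∀ x ∈ Y, closedBall x δ ⊆ X) :
    IsTypeF F Y (fun x => (supConvolution X u ε x : EReal)) := by
  have hmaps : ∀ z : closedBall (0 : Euc n) δ, MapsTo (· + (z : Euc n)) Y X := fun z x hx =>
    hYX x hx
      (by simpa only [mem_closedBall, dist_self_add_left, dist_zero_right] using z.2)
  refine isTypeF_of_isLUB (fun z : closedBall (0 : Euc n) δ =>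
    ((hu.comp_add_right z).mono hY (hmaps z) ?_).sub_const (1 / ε * ‖(z : Euc n)‖ ^ 2))
    fun x hx => isLUB_range_translates_supConvolution hε hδ (hYX x hx)
      (hosc x (hYX x hx (mem_closedBall_self hδ)))
  exact husc.comp (by fun_prop) (hmaps z)

theorem sup_convolution_approximation_general {n : ℕ} (F : Set (SymMat n)) (X : Set (Euc n))
    (u : Euc n → ℝ) (husc : UpperSemicontinuousOn u X)
    (hu : IsTypeF F X (fun x => (u x : EReal))) (N : ℝ) (hbd : ∀ x ∈ X, |u x| ≤ N)
    (U : ℝ → Euc n → ℝ)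
    (hU : ∀ ε : ℝ, 0 < ε → ∀ x : Euc n,
        U ε x = sSup {t : ℝ | ∃ y ∈ X, t = u y - (1/ε) * ‖x - y‖ ^ 2}) :
    (∀ x ∈ X, (∀ ε₁ ε₂ : ℝ, 0 < ε₁ → ε₁ ≤ ε₂ → U ε₁ x ≤ U ε₂ x) ∧
        Tendsto (fun ε => U ε x) (𝓝[>] (0 : ℝ)) (𝓝 (u x))) ∧
    (∀ ε : ℝ, 0 < ε → ConvexOn ℝ univ (fun x => U ε x + (1/ε) * ‖x‖ ^ 2)) ∧
    (∀ ε : ℝ, 0 < ε → ∀ Y, IsOpen Y → (∀ x ∈ Y, closedBall x √(2 * ε * N) ⊆ X) →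
      IsTypeF F Y (fun x => (U ε x : EReal))) := by
  have hbdd : BddAbove (u '' X) := ⟨N, forall_mem_image.2 fun x hx => (abs_le.1 (hbd x hx)).2⟩
  have hU' : ∀ ε, 0 < ε → U ε = supConvolution X u ε := fun ε hε =>
    funext fun x => (hU ε hε x).trans (supConvolution_eq_sSup X u ε x).symm
  refine ⟨fun x hx => ⟨fun ε₁ ε₂ hε₁ hle => ?_, ?_⟩, fun ε hε => ?_, fun ε hε Y hY hYX => ?_⟩
  · rw [hU' ε₁ hε₁, hU' ε₂ (hε₁.trans_le hle)]
    exact supConvolution_monotoneOn hbdd x hε₁ (hε₁.trans_le hle) hle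
  · refine (tendsto_supConvolution hbdd hx (husc x hx)).congr' ?_
    filter_upwards [self_mem_nhdsWithin] with ε hε
    rw [hU' ε hε]
  · rw [hU' ε hε]
    exact convexOn_supConvolution_add_sq_norm hbdd hε
  · rw [hU' ε hε]
    refine hu.supConvolution husc hε (Real.sqrt_nonneg _) (fun x hx y hy => ?_) hY hYX
    have hN : 0 ≤ N := (abs_nonneg _).trans (hbd x hx)
    have hδ : 1 / ε * √(2 * ε * N) ^ 2 = 2 * N := by
      rw [Real.sq_sqrt (by positivity)]
      field_simp
    linarith [(abs_le.1 (hbd x hx)).1, (abs_le.1 (hbd y hy)).2]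

/-- Theorem 8.2, sup-convolution approximation. -/
theorem sup_convolution_approximation {n : ℕ} (F : Set (SymMat n)) (hF : IsDirichletSet F)
    (X : Set (Euc n)) (hX : IsOpen X) (u : Euc n → ℝ)
    (husc : UpperSemicontinuousOn u X) (hu : IsTypeF F X (fun x => (u x : EReal)))
    (N : ℝ) (hN : 0 < N) (hbd : ∀ x ∈ X, |u x| ≤ N)
    (U : ℝ → Euc n → ℝ)
    (hU : ∀ ε : ℝ, 0 < ε → ∀ x : Euc n,
        U ε x = sSup {t : ℝ | ∃ y ∈ X, t = u y - (1/ε) * ‖x - y‖ ^ 2}) :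
    (∀ x ∈ X, (∀ ε₁ ε₂ : ℝ, 0 < ε₁ → ε₁ ≤ ε₂ → U ε₁ x ≤ U ε₂ x) ∧
        Filter.Tendsto (fun ε => U ε x) (𝓝[>] (0 : ℝ)) (𝓝 (u x))) ∧
    (∀ ε : ℝ, 0 < ε → ConvexOn ℝ Set.univ (fun x => U ε x + (1/ε) * ‖x‖ ^ 2)) ∧
    (∀ ε : ℝ, 0 < ε →
      IsTypeF F {x ∈ X | Real.sqrt (2 * ε * N) < Metric.infDist x Xᶜ}
        (fun x => (U ε x : EReal))) := by
  obtain ⟨hlim, hconv, htypeF⟩ :=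
    sup_convolution_approximation_general F X u husc hu N hbd U hU
  exact ⟨hlim, hconv, fun ε hε => htypeF ε hε _
    (hX.inter (isOpen_lt continuous_const (continuous_infDist_pt Xᶜ)))
    fun x hx => (closedBall_subset_ball hx.2).trans ball_infDist_compl_subset⟩
end
end

section
/- Let n ≥ 1 and let c be a real number with −nπ/2 < c < nπ/2. Then the set F_c = {A ∈ Sym²(ℝⁿ) : Σ_{i=1}^{n} arctan(λ_i(A)) ≥ c}, where λ₁(A), …, λₙ(A) are the eigenvalues of A counted with multiplicity, is a Dirichlet set, and its Dirichlet dual satisfies F̃_c = F_{−c}. -/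
open Set Metric Filter MeasureTheory Asymptotics
open scoped Topology BigOperators RealInnerProductSpace

noncomputable section

/-- A selfadjoint real matrix is Hermitian. -/
theorem SymMat.isHermitian {n : ℕ} (A : SymMat n) :
    (A : Matrix (Fin n) (Fin n) ℝ).IsHermitian := A.prop

/-- The eigenvalues (with multiplicity) of a symmetric matrix. -/
noncomputable def symEig {n : ℕ} (A : SymMat n) : Fin n → ℝ :=
  (SymMat.isHermitian A).eigenvalues

/-!
By the Courant–Fischer dimension count, the sorted eigenvalues satisfy `λₖ(A) ≤ λₖ(B) + ε` as soon
as `A ≤ B + ε • 1`. The case `ε = 0` gives positivity (`F + P ⊂ F`), the case `ε = ‖A - B‖` gives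
continuity of the eigenvalues, and negative `ε` shows that `Σᵢ arctan λᵢ` strictly decreases along
`A - t • 1`. Hence the interior of `F_c` is `{Σᵢ arctan λᵢ > c}`, and the duality follows because
`arctan` is odd and `-A` has eigenvalues `-λᵢ`.
-/

section SymmetricOperators

open scoped InnerProductSpace

variable {𝕜 E : Type*} [RCLike 𝕜] [NormedAddCommGroup E] [InnerProductSpace 𝕜 E]

theorem exists_ne_zero_inner_eq_zero_of_gt_of_lt [FiniteDimensional 𝕜 E] {ι : Type*} [Fintype ι]
    [LinearOrder ι] (hι : Fintype.card ι ≤ Module.finrank 𝕜 E) (u v : ι → E) (k : ι) :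
    ∃ x : E, x ≠ 0 ∧ (∀ j, k < j → ⟪u j, x⟫_𝕜 = 0) ∧ ∀ j, j < k → ⟪v j, x⟫_𝕜 = 0 := by
  let L : E →ₗ[𝕜] ({j : ι // j ≠ k} → 𝕜) :=
    LinearMap.pi fun j => (innerSL 𝕜 (if k < j.1 then u j.1 else v j.1)).toLinearMap
  have finrank_lt : Module.finrank 𝕜 ({j : ι // j ≠ k} → 𝕜) < Module.finrank 𝕜 E := by
    rw [Module.finrank_fintype_fun_eq_card]
    exact (Fintype.card_subtype_lt (x := k) (not_not_intro rfl)).trans_le hι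
  obtain ⟨x, hx, hx0⟩ := (Submodule.ne_bot_iff _).1 (LinearMap.ker_ne_bot_of_finrank_lt finrank_lt)
  have inner_eq_zero (j : ι) (hj : j ≠ k) : ⟪if k < j then u j else v j, x⟫_𝕜 = 0 :=
    congrFun (show L x = 0 from hx) ⟨j, hj⟩
  refine ⟨x, hx0, fun j hj => ?_, fun j hj => ?_⟩
  · simpa only [if_pos hj] using inner_eq_zero j hj.ne'
  · simpa only [if_neg hj.not_gt] using inner_eq_zero j hj.ne

variable {n : ℕ} {S T : E →ₗ[𝕜] E} [FiniteDimensional 𝕜 E]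

theorem re_inner_apply_self_eq_sum_eigenvalues (hT : T.IsSymmetric)
    (hn : Module.finrank 𝕜 E = n) (x : E) :
    RCLike.re ⟪T x, x⟫_𝕜 =
      ∑ i, hT.eigenvalues hn i * ‖⟪hT.eigenvectorBasis hn i, x⟫_𝕜‖ ^ 2 := by
  rw [← (hT.eigenvectorBasis hn).sum_inner_mul_inner, map_sum]
  refine Finset.sum_congr rfl fun i _ => ?_
  rw [hT x, hT.apply_eigenvectorBasis, inner_smul_right, mul_assoc,
    RCLike.re_ofReal_mul, inner_mul_symm_re_eq_norm, norm_mul, norm_inner_symm x, sq]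

theorem eigenvalues_mul_norm_sq_le_re_inner (hT : T.IsSymmetric) (hn : Module.finrank 𝕜 E = n)
    {k : Fin n} {x : E} (hx : ∀ j, k < j → ⟪hT.eigenvectorBasis hn j, x⟫_𝕜 = 0) :
    hT.eigenvalues hn k * ‖x‖ ^ 2 ≤ RCLike.re ⟪T x, x⟫_𝕜 := by
  rw [re_inner_apply_self_eq_sum_eigenvalues hT hn,
    ← (hT.eigenvectorBasis hn).sum_sq_norm_inner_right x, Finset.mul_sum]
  refine Finset.sum_le_sum fun j _ => ?_
  rcases lt_or_ge k j with hkj | hjk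
  · simp [hx j hkj]
  · gcongr
    exact hT.eigenvalues_antitone hn hjk

theorem re_inner_le_eigenvalues_mul_norm_sq (hT : T.IsSymmetric) (hn : Module.finrank 𝕜 E = n)
    {k : Fin n} {x : E} (hx : ∀ j, j < k → ⟪hT.eigenvectorBasis hn j, x⟫_𝕜 = 0) :
    RCLike.re ⟪T x, x⟫_𝕜 ≤ hT.eigenvalues hn k * ‖x‖ ^ 2 := by
  rw [re_inner_apply_self_eq_sum_eigenvalues hT hn,
    ← (hT.eigenvectorBasis hn).sum_sq_norm_inner_right x, Finset.mul_sum]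
  refine Finset.sum_le_sum fun j _ => ?_
  rcases lt_or_ge j k with hjk | hkj
  · simp [hx j hjk]
  · gcongr
    exact hT.eigenvalues_antitone hn hkj

theorem eigenvalues_le_add_of_re_inner_le_add (hS : S.IsSymmetric) (hT : T.IsSymmetric)
    (hn : Module.finrank 𝕜 E = n) {ε : ℝ}
    (h : ∀ x, RCLike.re ⟪S x, x⟫_𝕜 ≤ RCLike.re ⟪T x, x⟫_𝕜 + ε * ‖x‖ ^ 2) (k : Fin n) :
    hS.eigenvalues hn k ≤ hT.eigenvalues hn k + ε := by
  obtain ⟨x, hx0, hxS, hxT⟩ := exists_ne_zero_inner_eq_zero_of_gt_of_lt (𝕜 := 𝕜)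
    (by rw [hn, Fintype.card_fin]) (hS.eigenvectorBasis hn) (hT.eigenvectorBasis hn) k
  refine le_of_mul_le_mul_right ?_ (pow_pos (norm_pos_iff.2 hx0) 2)
  calc hS.eigenvalues hn k * ‖x‖ ^ 2
      ≤ RCLike.re ⟪S x, x⟫_𝕜 := eigenvalues_mul_norm_sq_le_re_inner hS hn hxS
    _ ≤ RCLike.re ⟪T x, x⟫_𝕜 + ε * ‖x‖ ^ 2 := h x
    _ ≤ hT.eigenvalues hn k * ‖x‖ ^ 2 + ε * ‖x‖ ^ 2 := by
        gcongr
        exact re_inner_le_eigenvalues_mul_norm_sq hT hn hxT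
    _ = (hT.eigenvalues hn k + ε) * ‖x‖ ^ 2 := (add_mul _ _ _).symm

end SymmetricOperators

section HermitianMatrices

open scoped Matrix.Norms.L2Operator ComplexOrder

variable {𝕜 m : Type*} [RCLike 𝕜] [Fintype m] [DecidableEq m] {A B : Matrix m m 𝕜}

theorem eigenvalues_le_add_of_posSemidef (hA : A.IsHermitian) (hB : B.IsHermitian) {ε : ℝ}
    (h : (B + ε • (1 : Matrix m m 𝕜) - A).PosSemidef) (i : m) :
    hA.eigenvalues i ≤ hB.eigenvalues i + ε := by
  refine eigenvalues_le_add_of_re_inner_le_add _ _ _ (fun x => ?_) _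
  have hx := (Matrix.isPositive_toEuclideanLin_iff.2 h).re_inner_nonneg_left x
  have hone : Matrix.toEuclideanLin (ε • (1 : Matrix m m 𝕜)) x = (ε : 𝕜) • x := by
    rw [RCLike.real_smul_eq_coe_smul (K := 𝕜), map_smul, LinearMap.smul_apply]
    simp only [Matrix.toLpLin_one, LinearMap.id_apply]
  rw [map_sub, map_add, LinearMap.sub_apply, LinearMap.add_apply, hone, inner_sub_left,
    inner_add_left, inner_smul_left, map_sub, map_add, RCLike.conj_ofReal, RCLike.re_ofReal_mul,
    inner_self_eq_norm_sq] at hx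
  linarith

theorem eigenvalues_le_add_norm_sub (hA : A.IsHermitian) (hB : B.IsHermitian) (i : m) :
    hA.eigenvalues i ≤ hB.eigenvalues i + ‖A - B‖ := by
  refine eigenvalues_le_add_of_re_inner_le_add _ _ _ (fun x => ?_) _
  have hAB : RCLike.re (inner 𝕜 (Matrix.toEuclideanLin (A - B) x) x) ≤ ‖A - B‖ * ‖x‖ ^ 2 :=
    calc RCLike.re (inner 𝕜 (Matrix.toEuclideanLin (A - B) x) x)
        ≤ ‖Matrix.toEuclideanLin (A - B) x‖ * ‖x‖ := re_inner_le_norm _ _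
      _ ≤ ‖A - B‖ * ‖x‖ * ‖x‖ := by
          gcongr
          exact Matrix.l2_opNorm_mulVec _ _
      _ = ‖A - B‖ * ‖x‖ ^ 2 := by ring
  rw [map_sub, LinearMap.sub_apply, inner_sub_left, map_sub] at hAB
  linarith

theorem continuous_eigenvalues (i : m) :
    Continuous fun A : selfAdjoint (Matrix m m 𝕜) =>
      (show (A : Matrix m m 𝕜).IsHermitian from A.2).eigenvalues i :=
  (LipschitzWith.of_le_add fun A B => (eigenvalues_le_add_norm_sub A.2 B.2 i).trans_eq
    (by rw [Subtype.dist_eq, dist_eq_norm])).continuous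

theorem eigenvalues_smul_one {r : ℝ} (h : (r • (1 : Matrix m m 𝕜)).IsHermitian) (i : m) :
    h.eigenvalues i = r := by
  have : Nonempty m := ⟨i⟩
  have hspec : spectrum ℝ (r • (1 : Matrix m m 𝕜)) = {r} := by
    rw [← Algebra.algebraMap_eq_smul_one, spectrum.scalar_eq]
  exact hspec.le (h.eigenvalues_mem_spectrum_real i)

theorem map_eigenvalues_neg (hA : A.IsHermitian) :
    Finset.univ.val.map hA.neg.eigenvalues = Finset.univ.val.map fun i => -hA.eigenvalues i := by
  refine Multiset.map_injective (RCLike.ofReal_injective (K := 𝕜)) ?_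
  have hcfc : -A = cfc (fun x : ℝ => -x) A := (cfc_neg_id A hA.isSelfAdjoint).symm
  rw [Multiset.map_map, ← hA.neg.roots_charpoly_eq_eigenvalues, hcfc, hA.charpoly_cfc_eq,
    Polynomial.roots_prod _ _ (Finset.prod_ne_zero_iff.2 fun i _ => Polynomial.X_sub_C_ne_zero _)]
  simp only [Polynomial.roots_X_sub_C, Multiset.bind_singleton, Multiset.map_map, Function.comp_def]

end HermitianMatrices

section SpectralSums

variable {n : ℕ} {f : ℝ → ℝ}

/-- The spectral sum `Σᵢ f(λᵢ(A))` over the eigenvalues of `A` with multiplicity; the special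
Lagrangian operator is the case `f = arctan`. -/
def spectralSum (f : ℝ → ℝ) (A : SymMat n) : ℝ := ∑ i, f (symEig A i)

theorem spectralSum_le_spectralSum_add (hf : Monotone f) (A : SymMat n) {P : SymMat n}
    (hP : (P : Matrix (Fin n) (Fin n) ℝ).PosSemidef) : spectralSum f A ≤ spectralSum f (A + P) := by
  refine Finset.sum_le_sum fun i _ => hf ?_
  have h : symEig A i ≤ symEig (A + P) i + 0 :=
    eigenvalues_le_add_of_posSemidef A.isHermitian (A + P).isHermitian (by simpa using hP) i
  rwa [add_zero] at h

theorem spectralSum_sub_smul_one_lt [NeZero n] (hf : StrictMono f) (A : SymMat n) {t : ℝ}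
    (ht : 0 < t) : spectralSum f (A - t • symOne n) < spectralSum f A := by
  refine Finset.sum_lt_sum_of_nonempty Finset.univ_nonempty fun i _ => hf ?_
  have h : symEig (A - t • symOne n) i ≤ symEig A i + -t :=
    eigenvalues_le_add_of_posSemidef (A - t • symOne n).isHermitian A.isHermitian
      (by simp [symOne, Matrix.PosSemidef.zero]) i
  linarith

theorem continuous_spectralSum (hf : Continuous f) : Continuous (spectralSum f : SymMat n → ℝ) :=
  continuous_finsetSum _ fun i _ => hf.comp (continuous_eigenvalues i)

theorem spectralSum_smul_one (f : ℝ → ℝ) (r : ℝ) : spectralSum f (r • symOne n) = n * f r := by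
  have h (i : Fin n) : symEig (r • symOne n) i = r :=
    eigenvalues_smul_one (r • symOne n).isHermitian i
  simp only [spectralSum, h, Finset.sum_const, Finset.card_univ, Fintype.card_fin, nsmul_eq_mul]

theorem spectralSum_neg (f : ℝ → ℝ) (A : SymMat n) :
    spectralSum f (-A) = spectralSum (fun x => f (-x)) A := by
  have h := congrArg (fun s => (s.map f).sum) (map_eigenvalues_neg A.isHermitian)
  simpa only [Multiset.map_map] using! h

theorem interior_setOf_le_spectralSum [NeZero n] (hf : StrictMono f) (hfc : Continuous f) (c : ℝ) :
    interior {A : SymMat n | c ≤ spectralSum f A} = {A | c < spectralSum f A} := by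
  refine Subset.antisymm (fun A hA => ?_) <| interior_maximal (fun A (hA : c < _) => hA.le)
    (isOpen_lt continuous_const (continuous_spectralSum hfc))
  have hline : Continuous fun t : ℝ => A - t • symOne n :=
    continuous_induced_rng.2 (continuous_const.sub (continuous_id.smul continuous_const))
  have hnear : ∀ᶠ t : ℝ in 𝓝 0, c ≤ spectralSum f (A - t • symOne n) :=
    hline.tendsto' 0 A (by simp) |>.eventually (mem_interior_iff_mem_nhds.1 hA)
  obtain ⟨t, hct, ht⟩ := ((hnear.filter_mono nhdsWithin_le_nhds).and
    (self_mem_nhdsWithin (s := Ioi 0))).exists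
  exact hct.trans_lt (spectralSum_sub_smul_one_lt hf A ht)

end SpectralSums

/-- By the intermediate value theorem, `c` has the form `n * f s` exactly when the superlevel set is
nonempty and proper. -/
theorem specialLagrangian_branches_dirichlet_general {n : ℕ} [NeZero n] {f : ℝ → ℝ}
    (hf : StrictMono f) (hfc : Continuous f) {c s : ℝ} (hs : n * f s = c) :
    IsDirichletSet {A : SymMat n | c ≤ ∑ i, f (symEig A i)} ∧
    dirDual {A : SymMat n | c ≤ ∑ i, f (symEig A i)} =
      {A : SymMat n | -c ≤ ∑ i, -f (-symEig A i)} := by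
  have hsum : spectralSum f (s • symOne n) = c := (spectralSum_smul_one f s).trans hs
  refine ⟨⟨⟨s • symOne n, hsum.ge⟩, fun huniv => ?_,
    isClosed_le continuous_const (continuous_spectralSum hfc),
    fun A hA P hP => le_trans hA (spectralSum_le_spectralSum_add hf.monotone A hP)⟩, ?_⟩
  · have hlt := spectralSum_sub_smul_one_lt hf (s • symOne n) one_pos
    have hge : c ≤ spectralSum f (s • symOne n - (1 : ℝ) • symOne n) := eq_univ_iff_forall.1 huniv _
    exact (hlt.trans_eq hsum).not_ge hge
  · ext A
    change -A ∉ interior {A | c ≤ spectralSum f A} ↔ -c ≤ ∑ i, -f (-symEig A i)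
    rw [interior_setOf_le_spectralSum hf hfc, mem_ofPred_eq, not_lt, spectralSum_neg,
      Finset.sum_neg_distrib, neg_le_neg_iff, spectralSum]

/-- Proposition 10.4: for `−nπ/2 < c < nπ/2`, the set
`F_c = {A : Σᵢ arctan λᵢ(A) ≥ c}` is a Dirichlet set and its Dirichlet dual is `F_{−c}`. -/
theorem specialLagrangian_branches_dirichlet {n : ℕ} (hn : 1 ≤ n) (c : ℝ)
    (hc1 : -(n * Real.pi / 2) < c) (hc2 : c < n * Real.pi / 2) :
    IsDirichletSet {A : SymMat n | c ≤ ∑ i, Real.arctan (symEig A i)} ∧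
    dirDual {A : SymMat n | c ≤ ∑ i, Real.arctan (symEig A i)} =
      {A : SymMat n | -c ≤ ∑ i, Real.arctan (symEig A i)} := by
  have hn0 : (0 : ℝ) < n := by exact_mod_cast hn
  have : NeZero n := ⟨by lia⟩
  have hc : n * Real.arctan (Real.tan (c / n)) = c := by
    rw [Real.arctan_tan, mul_div_cancel₀ c hn0.ne']
    · rw [lt_div_iff₀ hn0]; linarith
    · rw [div_lt_iff₀ hn0]; linarith
  simpa only [Real.arctan_neg, neg_neg] using
    specialLagrangian_branches_dirichlet_general Real.arctan_strictMono Real.continuous_arctan hc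
end
end
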